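/- Let T be an N-ω-DCTP_2 theory. Then every internally NSOP_1 partial type over a model M is co-NSOP_1. -/

import Mathlib

namespace NSOP3Paper

open FirstOrder Language

universe u v w w' w₂ x y z

/-- Consistency (equivalently, by compactness over the monster model, finite
satisfiability) of a family of conditions on tuples. -/
def FamConsistent {ι : Type*} {X : Type*} (C : ι → X → Prop) : Prop :=
  ∀ s : Finset ι, ∃ xx : X, ∀ i ∈ s, C i xx

/-- `k`-inconsistency of a family of conditions: any `k` of them (with pairwise
distinct indices) are jointly unsatisfiable. -/
def FamKInconsistent {ι : Type*} {X : Type*} (k : ℕ) (C : ι → X → Prop) : Prop :=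
  ∀ s : Finset ι, s.card = k → ¬∃ xx : X, ∀ i ∈ s, C i xx

/-- Flattening of a family of tuples into a single tuple. -/
def flat {𝕄 : Type w} {ι : Type*} {β : Type*} (a : ι → β → 𝕄) : ι × β → 𝕄 :=
  fun q => a q.1 q.2

/-- A first-order `L`-formula in free variables `α`, together with a tuple of
parameters from `𝕄`; this represents an instance `φ(x̄, b̄)`. -/
structure ParamFormula (L : FirstOrder.Language.{u, v}) (𝕄 : Type w) [L.Structure 𝕄]
    (α : Type w') where
  Params : Type
  toFormula : L.Formula (α ⊕ Params)
  params : Params → 𝕄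

namespace ParamFormula

variable {L : FirstOrder.Language.{u, v}} {𝕄 : Type w} [L.Structure 𝕄] {α : Type w'}

/-- Realization of `φ(x̄, b̄)` at a tuple from `𝕄`. -/
def Realize (φ : ParamFormula L 𝕄 α) (xx : α → 𝕄) : Prop :=
  φ.toFormula.Realize (Sum.elim xx φ.params)

/-- All parameters of `φ` lie in `A`; i.e. `φ ∈ L(A)`. -/
def ParamsIn (φ : ParamFormula L 𝕄 α) (A : Set 𝕄) : Prop :=
  ∀ i, φ.params i ∈ A

/-- Negation of a formula with parameters. -/
protected def not (φ : ParamFormula L 𝕄 α) : ParamFormula L 𝕄 α :=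
  ⟨φ.Params, BoundedFormula.not φ.toFormula, φ.params⟩

/-- Substitute a tuple of elements of `𝕄` for the second group of free variables,
obtaining the instance `φ(x̄, c̄)` as a formula with parameters. -/
def subst {γ : Type} (φ : ParamFormula L 𝕄 (α ⊕ γ)) (c : γ → 𝕄) : ParamFormula L 𝕄 α :=
  ⟨γ ⊕ φ.Params,
    (φ.toFormula).relabel (Sum.elim (Sum.map id Sum.inl) (Sum.inr ∘ Sum.inr)),
    Sum.elim c φ.params⟩

end ParamFormula

section TypesDefs

variable (L : FirstOrder.Language.{u, v}) (𝕄 : Type w) [L.Structure 𝕄]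

/-- Two tuples have the same type over the parameter set `A` (written `b ≡_A b'`). -/
def TpEq (A : Set 𝕄) {β : Type w'} (b b' : β → 𝕄) : Prop :=
  ∀ φ : ParamFormula L 𝕄 β, φ.ParamsIn A → (φ.Realize b ↔ φ.Realize b')

/-- A complete global type in variables `α`: a complete, consistent set of formulas
with parameters from the monster model `𝕄`. -/
structure GlobalType (α : Type w') where
  Mem : ParamFormula L 𝕄 α → Prop
  consistent : ∀ S : Finset (ParamFormula L 𝕄 α), (∀ φ ∈ S, Mem φ) →
    ∃ xx : α → 𝕄, ∀ φ ∈ S, φ.Realize xx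
  complete : ∀ φ : ParamFormula L 𝕄 α, Mem φ ∨ Mem φ.not

/-- A sequence of tuples is indiscernible over the parameter set `A`: any two finite
increasing subtuples of the same length have the same type over `A`. -/
def IndiscernibleOver (A : Set 𝕄) {β : Type w'} (b : ℕ → β → 𝕄) : Prop :=
  ∀ (n : ℕ) (f g : Fin n → ℕ), StrictMono f → StrictMono g →
    TpEq L 𝕄 A (fun q : Fin n × β => b (f q.1) q.2) (fun q : Fin n × β => b (g q.1) q.2)

end TypesDefs

namespace GlobalType

variable {L : FirstOrder.Language.{u, v}} {𝕄 : Type w} [L.Structure 𝕄] {α : Type w'}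

/-- A global type is invariant over `A` if membership of `φ(x̄, b̄)` depends only on
the type of `b̄` over `A`. -/
def InvariantOver (p : GlobalType L 𝕄 α) (A : Set 𝕄) : Prop :=
  ∀ (P : Type) (ψ : L.Formula (α ⊕ P)) (b b' : P → 𝕄),
    TpEq L 𝕄 A b b' → (p.Mem ⟨P, ψ, b⟩ ↔ p.Mem ⟨P, ψ, b'⟩)

/-- A global type is finitely satisfiable in `A` if each of its formulas is satisfied
by a tuple from `A`. -/
def FinSatIn (p : GlobalType L 𝕄 α) (A : Set 𝕄) : Prop :=
  ∀ φ : ParamFormula L 𝕄 α, p.Mem φ → ∃ xx : α → 𝕄, (∀ i, xx i ∈ A) ∧ φ.Realize xx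

/-- `a ⊨ p|_B` : the tuple `a` realizes the restriction of the global type `p` to the
parameter set `B`. -/
def RealizesOver (p : GlobalType L 𝕄 α) (B : Set 𝕄) (a : α → 𝕄) : Prop :=
  ∀ φ : ParamFormula L 𝕄 α, p.Mem φ → φ.ParamsIn B → φ.Realize a

/-- `(b i)` is a Morley sequence in `p` over `A`: each `b i ⊨ p|_{A b_{<i}}`. -/
def IsMorleyOver (p : GlobalType L 𝕄 α) (A : Set 𝕄) (b : ℕ → α → 𝕄) : Prop :=
  ∀ i : ℕ, p.RealizesOver (A ∪ ⋃ j ∈ Set.Iio i, Set.range (b j)) (b i)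

end GlobalType

section MorleyDefs

variable (L : FirstOrder.Language.{u, v}) (𝕄 : Type w) [L.Structure 𝕄]

/-- `(b i)` is an invariant Morley sequence over `A`: a Morley sequence in some global
type invariant over `A`. -/
def IsInvMorleyOver (A : Set 𝕄) {α : Type w'} (b : ℕ → α → 𝕄) : Prop :=
  ∃ p : GlobalType L 𝕄 α, p.InvariantOver A ∧ p.IsMorleyOver A b

/-- `(b i)` is a coheir Morley sequence over `A`: a Morley sequence in some global
type finitely satisfiable in `A`. -/
def IsCoheirMorleyOver (A : Set 𝕄) {α : Type w'} (b : ℕ → α → 𝕄) : Prop :=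
  ∃ p : GlobalType L 𝕄 α, p.FinSatIn A ∧ p.IsMorleyOver A b

end MorleyDefs

namespace ParamFormula

variable {L : FirstOrder.Language.{u, v}} {𝕄 : Type w} [L.Structure 𝕄] {α : Type w'}

/-- `φ(x̄, b̄)` Kim-divides over `A`: some invariant Morley sequence over `A` starting
with `b̄` makes the corresponding instances inconsistent. -/
def KimDividesOver (φ : ParamFormula L 𝕄 α) (A : Set 𝕄) : Prop :=
  ∃ b : ℕ → φ.Params → 𝕄, b 0 = φ.params ∧ IsInvMorleyOver L 𝕄 A b ∧
    ¬FamConsistent fun (i : ℕ) (xx : α → 𝕄) => φ.toFormula.Realize (Sum.elim xx (b i))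

/-- `φ(x̄, b̄)` Conant-divides over `A`: every invariant Morley sequence over `A`
starting with `b̄` makes the corresponding instances inconsistent. -/
def ConantDividesOver (φ : ParamFormula L 𝕄 α) (A : Set 𝕄) : Prop :=
  ∀ b : ℕ → φ.Params → 𝕄, b 0 = φ.params → IsInvMorleyOver L 𝕄 A b →
    ¬FamConsistent fun (i : ℕ) (xx : α → 𝕄) => φ.toFormula.Realize (Sum.elim xx (b i))

/-- `φ(x̄, b̄)` divides over `A`: some `A`-indiscernible sequence starting with `b̄`
makes the corresponding instances inconsistent. -/
def DividesOver (φ : ParamFormula L 𝕄 α) (A : Set 𝕄) : Prop :=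
  ∃ b : ℕ → φ.Params → 𝕄, b 0 = φ.params ∧ IndiscernibleOver L 𝕄 A b ∧
    ¬FamConsistent fun (i : ℕ) (xx : α → 𝕄) => φ.toFormula.Realize (Sum.elim xx (b i))

/-- `φ` Kim-forks over `A`: it implies a finite disjunction of formulas Kim-dividing
over `A`. -/
def KimForksOver (φ : ParamFormula L 𝕄 α) (A : Set 𝕄) : Prop :=
  ∃ (k : ℕ) (ψ : Fin k → ParamFormula L 𝕄 α), (∀ j, (ψ j).KimDividesOver A) ∧
    ∀ xx : α → 𝕄, φ.Realize xx → ∃ j, (ψ j).Realize xx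

/-- `φ` Conant-forks over `A`: it implies a finite disjunction of formulas
Conant-dividing over `A`. -/
def ConantForksOver (φ : ParamFormula L 𝕄 α) (A : Set 𝕄) : Prop :=
  ∃ (k : ℕ) (ψ : Fin k → ParamFormula L 𝕄 α), (∀ j, (ψ j).ConantDividesOver A) ∧
    ∀ xx : α → 𝕄, φ.Realize xx → ∃ j, (ψ j).Realize xx

/-- `φ` forks over `A`: it implies a finite disjunction of formulas dividing over `A`. -/
def ForksOver (φ : ParamFormula L 𝕄 α) (A : Set 𝕄) : Prop :=
  ∃ (k : ℕ) (ψ : Fin k → ParamFormula L 𝕄 α), (∀ j, (ψ j).DividesOver A) ∧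
    ∀ xx : α → 𝕄, φ.Realize xx → ∃ j, (ψ j).Realize xx

end ParamFormula

section IndDefs

variable (L : FirstOrder.Language.{u, v}) (𝕄 : Type w) [L.Structure 𝕄]

/-- `a ⫝^K_A B` : `tp(a/A ∪ B)` contains no formula Kim-forking over `A`. -/
def IndKim (A B : Set 𝕄) {γ : Type w'} (a : γ → 𝕄) : Prop :=
  ∀ φ : ParamFormula L 𝕄 γ, φ.ParamsIn (A ∪ B) → φ.Realize a → ¬φ.KimForksOver A

/-- `a ⫝^{Kd}_A B` : `tp(a/A ∪ B)` contains no formula Kim-dividing over `A`. -/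
def IndKd (A B : Set 𝕄) {γ : Type w'} (a : γ → 𝕄) : Prop :=
  ∀ φ : ParamFormula L 𝕄 γ, φ.ParamsIn (A ∪ B) → φ.Realize a → ¬φ.KimDividesOver A

/-- `a ⫝^{K*}_A B` : Conant-independence. -/
def IndConant (A B : Set 𝕄) {γ : Type w'} (a : γ → 𝕄) : Prop :=
  ∀ φ : ParamFormula L 𝕄 γ, φ.ParamsIn (A ∪ B) → φ.Realize a → ¬φ.ConantForksOver A

/-- `a ⫝^{K*d}_A B` : Conant-dividing independence. -/
def IndConantD (A B : Set 𝕄) {γ : Type w'} (a : γ → 𝕄) : Prop :=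
  ∀ φ : ParamFormula L 𝕄 γ, φ.ParamsIn (A ∪ B) → φ.Realize a → ¬φ.ConantDividesOver A

/-- `a ⫝^f_A B` : forking-independence. -/
def IndForking (A B : Set 𝕄) {γ : Type w'} (a : γ → 𝕄) : Prop :=
  ∀ φ : ParamFormula L 𝕄 γ, φ.ParamsIn (A ∪ B) → φ.Realize a → ¬φ.ForksOver A

/-- `a ⫝^i_A B` : `tp(a/A ∪ B)` extends to a global type invariant over `A`. -/
def IndInv (A B : Set 𝕄) {γ : Type w'} (a : γ → 𝕄) : Prop :=
  ∃ p : GlobalType L 𝕄 γ, p.InvariantOver A ∧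
    ∀ φ : ParamFormula L 𝕄 γ, φ.ParamsIn (A ∪ B) → φ.Realize a → p.Mem φ

/-- `a ⫝^u_A B` : `tp(a/A ∪ B)` extends to a global type finitely satisfiable in `A`. -/
def IndFinSat (A B : Set 𝕄) {γ : Type w'} (a : γ → 𝕄) : Prop :=
  ∃ p : GlobalType L 𝕄 γ, p.FinSatIn A ∧
    ∀ φ : ParamFormula L 𝕄 γ, φ.ParamsIn (A ∪ B) → φ.Realize a → p.Mem φ

/-- `a ⫝^{K+}_A b` : there is an invariant Morley sequence over `A` starting with `b`
that is indiscernible over `A ∪ a`. -/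
def IndKPlus (A : Set 𝕄) {δ : Type w'} {γ : Type w₂} (b : δ → 𝕄) (a : γ → 𝕄) : Prop :=
  ∃ bs : ℕ → δ → 𝕄, bs 0 = b ∧ IsInvMorleyOver L 𝕄 A bs ∧
    IndiscernibleOver L 𝕄 (A ∪ Set.range a) bs

/-- `a ⫝^{K+u}_A b` : there is a coheir Morley sequence over `A` starting with `b`
that is indiscernible over `A ∪ a`. -/
def IndKPlusU (A : Set 𝕄) {δ : Type w'} {γ : Type w₂} (b : δ → 𝕄) (a : γ → 𝕄) : Prop :=
  ∃ bs : ℕ → δ → 𝕄, bs 0 = b ∧ IsCoheirMorleyOver L 𝕄 A bs ∧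
    IndiscernibleOver L 𝕄 (A ∪ Set.range a) bs

/-- Conant-independence `⫝^{K*}` is symmetric (over every small model). -/
def ConantSymmetric : Prop :=
  ∀ (M : L.ElementarySubstructure 𝕄) (γ δ : Type w) (a : γ → 𝕄) (b : δ → 𝕄),
    IndConant L 𝕄 (M : Set 𝕄) (Set.range b) a → IndConant L 𝕄 (M : Set 𝕄) (Set.range a) b

/-- Conant-dividing independence `⫝^{K*d}` is symmetric. -/
def ConantDSymmetric : Prop :=
  ∀ (M : L.ElementarySubstructure 𝕄) (γ δ : Type w) (a : γ → 𝕄) (b : δ → 𝕄),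
    IndConantD L 𝕄 (M : Set 𝕄) (Set.range b) a → IndConantD L 𝕄 (M : Set 𝕄) (Set.range a) b

/-- The relation `⫝^{K+}` is symmetric. -/
def KPlusSymmetric : Prop :=
  ∀ (M : L.ElementarySubstructure 𝕄) (γ δ : Type w) (a : γ → 𝕄) (b : δ → 𝕄),
    IndKPlus L 𝕄 (M : Set 𝕄) b a → IndKPlus L 𝕄 (M : Set 𝕄) a b

/-- Forking-independence satisfies the chain condition with respect to invariant
Morley sequences. -/
def ChainConditionF : Prop :=
  ∀ (M : L.ElementarySubstructure 𝕄) (γ δ : Type w) (a : γ → 𝕄) (bs : ℕ → δ → 𝕄),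
    IsInvMorleyOver L 𝕄 (M : Set 𝕄) bs →
    IndForking L 𝕄 (M : Set 𝕄) (Set.range (bs 0)) a →
    ∃ bs' : ℕ → δ → 𝕄,
      TpEq L 𝕄 ((M : Set 𝕄) ∪ Set.range (bs 0)) (flat bs') (flat bs) ∧
      IndiscernibleOver L 𝕄 ((M : Set 𝕄) ∪ Set.range a) bs' ∧
      IndForking L 𝕄 (M : Set 𝕄) (Set.range (flat bs')) a

/-- Kim-independence satisfies the chain condition with respect to invariant Morley
sequences. -/
def ChainConditionK : Prop :=
  ∀ (M : L.ElementarySubstructure 𝕄) (γ δ : Type w) (a : γ → 𝕄) (bs : ℕ → δ → 𝕄),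
    IsInvMorleyOver L 𝕄 (M : Set 𝕄) bs →
    IndKim L 𝕄 (M : Set 𝕄) (Set.range (bs 0)) a →
    ∃ bs' : ℕ → δ → 𝕄,
      TpEq L 𝕄 ((M : Set 𝕄) ∪ Set.range (bs 0)) (flat bs') (flat bs) ∧
      IndiscernibleOver L 𝕄 ((M : Set 𝕄) ∪ Set.range a) bs' ∧
      IndKim L 𝕄 (M : Set 𝕄) (Set.range (flat bs')) a

/-- `T` is NSOP₃: there is no definable binary relation on tuples with no 3-cycles
containing an infinite chain. -/
def IsNSOP3 : Prop :=
  ¬∃ (m : ℕ) (R : ParamFormula L 𝕄 (Fin m ⊕ Fin m)) (a : ℕ → Fin m → 𝕄),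
    (∀ i j : ℕ, i < j → R.Realize (Sum.elim (a i) (a j))) ∧
    ¬∃ x1 x2 x3 : Fin m → 𝕄,
      R.Realize (Sum.elim x1 x2) ∧ R.Realize (Sum.elim x2 x3) ∧ R.Realize (Sum.elim x3 x1)

/-- `𝕄` is a `κ`-monster: every consistent type in fewer than `κ` variables over a
parameter set of size less than `κ` is realized. -/
class IsMonster (κ : Cardinal.{w}) : Prop where
  saturated : ∀ {α : Type w} (A : Set 𝕄) (S : Set (ParamFormula L 𝕄 α)),
    Cardinal.mk α < κ → Cardinal.mk A < κ → (∀ φ ∈ S, φ.ParamsIn A) →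
    (∀ S₀ : Finset (ParamFormula L 𝕄 α), (∀ φ ∈ S₀, φ ∈ S) →
      ∃ xx : α → 𝕄, ∀ φ ∈ S₀, φ.Realize xx) →
    ∃ xx : α → 𝕄, ∀ φ ∈ S, φ.Realize xx

/-- A tuple realizes the partial type `P`. -/
def RealizesPType {nv : ℕ} (P : Set (ParamFormula L 𝕄 (Fin nv))) (a : Fin nv → 𝕄) : Prop :=
  ∀ φ ∈ P, φ.Realize a

/-- `p(x̄)` is co-NSOP₁: no `L(M)`-formula `φ(x̄, ȳ)` and tree of tuples of
realizations of `p` witness SOP₁-style consistency/inconsistency. -/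
def CoNSOP1 (M : Set 𝕄) {nv : ℕ} (P : Set (ParamFormula L 𝕄 (Fin nv))) : Prop :=
  ¬∃ (k m : ℕ) (φ : ParamFormula L 𝕄 (Fin k ⊕ (Fin m × Fin nv)))
      (b : List Bool → Fin m → Fin nv → 𝕄),
    φ.ParamsIn M ∧
    (∀ η j, RealizesPType L 𝕄 P (b η j)) ∧
    (∀ σ : ℕ → Bool, FamConsistent fun (n : ℕ) (xx : Fin k → 𝕄) =>
      (φ.subst (flat (b (List.ofFn fun i : Fin n => σ i)))).Realize xx) ∧
    (∀ η₁ η₂ : List Bool, (η₁ ++ [false]) <+: η₂ →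
      ¬∃ xx : Fin k → 𝕄, (φ.subst (flat (b η₂))).Realize xx ∧
        (φ.subst (flat (b (η₁ ++ [true])))).Realize xx)

/-- The set of realizations of the partial type `P`. -/
def PRealizations {nv : ℕ} (P : Set (ParamFormula L 𝕄 (Fin nv))) : Type w :=
  { a : Fin nv → 𝕄 // RealizesPType L 𝕄 P a }

/-- The language `L_p` associated to a partial `nv`-type: an `m`-ary relation symbol
for each `L(M)`-formula in `m` groups of `nv` variables. -/
def pLang (M : Set 𝕄) (nv : ℕ) : Language :=
  ⟨fun _ => Empty, fun m => { φ : ParamFormula L 𝕄 (Fin m × Fin nv) // φ.ParamsIn M }⟩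

/-- The structure `M_p` on the set of realizations of `p`, with relations interpreted
by the corresponding formulas in `𝕄`. -/
instance pStruct (M : Set 𝕄) {nv : ℕ} (P : Set (ParamFormula L 𝕄 (Fin nv))) :
    (pLang L 𝕄 M nv).Structure (PRealizations L 𝕄 P) where
  funMap := fun {n} f _ => f.elim
  RelMap := fun {m} R xs => R.1.Realize fun q : Fin m × Fin nv => (xs q.1).1 q.2

end IndDefs

/-- An SOP₁ pattern witnessed inside the structure `W`. -/
def SOP1PatternIn (L' : FirstOrder.Language.{x, y}) (W : Type z) [L'.Structure W] : Prop :=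
  ∃ (k n : ℕ) (φ : L'.Formula (Fin k ⊕ Fin n)) (bt : List Bool → Fin n → W),
    (∀ σ : ℕ → Bool, FamConsistent fun (i : ℕ) (xx : Fin k → W) =>
      φ.Realize (Sum.elim xx (bt (List.ofFn fun j : Fin i => σ j)))) ∧
    (∀ η₁ η₂ : List Bool, (η₁ ++ [false]) <+: η₂ →
      ¬∃ xx : Fin k → W, φ.Realize (Sum.elim xx (bt η₂)) ∧
        φ.Realize (Sum.elim xx (bt (η₁ ++ [true]))))

/-- The complete theory of `N` is NSOP₁: no SOP₁ pattern in any elementarily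
equivalent structure. -/
def IsNSOP1Th (L' : FirstOrder.Language.{x, y}) (N : Type z) [L'.Structure N] : Prop :=
  ¬∃ (W : Type (max x y z)) (S : L'.Structure W),
    L'.completeTheory N = @Language.completeTheory L' W S ∧ @SOP1PatternIn L' W S

/-- The formula `φ(x̄, ȳ)` has the tree property, witnessed in `W`. -/
def FormulaTPIn (L' : FirstOrder.Language.{x, y}) (W : Type z) [L'.Structure W]
    {k n : ℕ} (φ : L'.Formula (Fin k ⊕ Fin n)) : Prop :=
  ∃ (kk : ℕ) (bt : List ℕ → Fin n → W),
    (∀ σ : ℕ → ℕ, FamConsistent fun (i : ℕ) (xx : Fin k → W) =>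
      φ.Realize (Sum.elim xx (bt (List.ofFn fun j : Fin i => σ j)))) ∧
    (∀ η : List ℕ, FamKInconsistent kk fun (j : ℕ) (xx : Fin k → W) =>
      φ.Realize (Sum.elim xx (bt (η ++ [j]))))

/-- The formula `φ(x̄, ȳ)` has SOP₁, witnessed in `W`. -/
def FormulaSOP1In (L' : FirstOrder.Language.{x, y}) (W : Type z) [L'.Structure W]
    {k n : ℕ} (φ : L'.Formula (Fin k ⊕ Fin n)) : Prop :=
  ∃ bt : List Bool → Fin n → W,
    (∀ σ : ℕ → Bool, FamConsistent fun (i : ℕ) (xx : Fin k → W) =>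
      φ.Realize (Sum.elim xx (bt (List.ofFn fun j : Fin i => σ j)))) ∧
    (∀ η₁ η₂ : List Bool, (η₁ ++ [false]) <+: η₂ →
      ¬∃ xx : Fin k → W, φ.Realize (Sum.elim xx (bt η₂)) ∧
        φ.Realize (Sum.elim xx (bt (η₁ ++ [true]))))

/-- Longest common prefix (meet in the tree `2^{<ω}`). -/
def meet : List Bool → List Bool → List Bool
  | a :: as, b :: bs => if a = b then a :: meet as bs else []
  | _, _ => []

/-- Strict tree order (strict prefix) on `2^{<ω}`. -/
def StrictPrefix (η ν : List Bool) : Prop := η <+: ν ∧ η ≠ ν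

/-- Lexicographic order on `2^{<ω}`. -/
def LexLt (η ν : List Bool) : Prop :=
  StrictPrefix η ν ∨ ((meet η ν ++ [false]) <+: η ∧ (meet η ν ++ [true]) <+: ν)

/-- The meet `c 0 ∧ … ∧ c k`. -/
def meetInit (c : ℕ → List Bool) : ℕ → List Bool
  | 0 => c 0
  | k + 1 => meet (meetInit c k) (c (k + 1))

/-- `c 0, …, c (l-1)` is a descending comb: a lexicographically increasing antichain
whose successive meets form a strictly descending chain in the tree order. -/
def IsDescendingComb (l : ℕ) (c : ℕ → List Bool) : Prop :=
  (∀ i j, i < l → j < l → i ≠ j → ¬(c i <+: c j)) ∧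
  (∀ i j, i < j → j < l → LexLt (c i) (c j)) ∧
  (∀ k, k + 1 < l → StrictPrefix (meetInit c (k + 1)) (meetInit c k))

section DCTP

variable (L : FirstOrder.Language.{u, v}) (𝕄 : Type w) [L.Structure 𝕄]

/-- `T` has `k`-DCTP₂. -/
def HasKDCTP2 (k : ℕ) : Prop :=
  ∃ (kx ny : ℕ) (φ : ParamFormula L 𝕄 (Fin kx ⊕ Fin ny)) (b : List Bool → Fin ny → 𝕄),
    (∀ σ : ℕ → Bool, FamKInconsistent k fun (n : ℕ) (xx : Fin kx → 𝕄) =>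
      (φ.subst (b (List.ofFn fun i : Fin n => σ i))).Realize xx) ∧
    (∀ (l : ℕ) (c : ℕ → List Bool), IsDescendingComb l c →
      ∃ xx : Fin kx → 𝕄, ∀ i < l, (φ.subst (b (c i))).Realize xx)

/-- `T` is N-ω-DCTP₂: it does not have `k`-DCTP₂ for any `k`. -/
def NOmegaDCTP2 : Prop := ∀ k : ℕ, ¬HasKDCTP2 L 𝕄 k

/-- A generic triple of sets of realizations of three partial types: the three sets
begin mutually indiscernible invariant Morley sequences over `M`. -/
def GenericTriple (M : Set 𝕄) {ι₁ ι₂ ι₃ : Type w} {nv₁ nv₂ nv₃ : ℕ}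
    (A : ι₁ → Fin nv₁ → 𝕄) (B : ι₂ → Fin nv₂ → 𝕄) (C : ι₃ → Fin nv₃ → 𝕄) : Prop :=
  ∃ (IA : ℕ → ι₁ → Fin nv₁ → 𝕄) (IB : ℕ → ι₂ → Fin nv₂ → 𝕄) (IC : ℕ → ι₃ → Fin nv₃ → 𝕄),
    IA 0 = A ∧ IB 0 = B ∧ IC 0 = C ∧
    IsInvMorleyOver L 𝕄 M (fun i => flat (IA i)) ∧
    IsInvMorleyOver L 𝕄 M (fun i => flat (IB i)) ∧
    IsInvMorleyOver L 𝕄 M (fun i => flat (IC i)) ∧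
    IndiscernibleOver L 𝕄
      (M ∪ Set.range (flat fun i => flat (IB i)) ∪ Set.range (flat fun i => flat (IC i)))
      (fun i => flat (IA i)) ∧
    IndiscernibleOver L 𝕄
      (M ∪ Set.range (flat fun i => flat (IA i)) ∪ Set.range (flat fun i => flat (IC i)))
      (fun i => flat (IB i)) ∧
    IndiscernibleOver L 𝕄
      (M ∪ Set.range (flat fun i => flat (IA i)) ∪ Set.range (flat fun i => flat (IB i)))
      (fun i => flat (IC i))

end DCTP

/-- The language of hypergraph sequences: one `n`-ary relation symbol for each `n`. -/
def hgLang : FirstOrder.Language.{0, 0} := ⟨fun _ => Empty, fun _ => PUnit⟩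

section Hypergraph

variable (V : Type z) [hgLang.Structure V]

/-- The `n`-ary edge relation of a hypergraph sequence. -/
def hgRel {n : ℕ} (v : Fin n → V) : Prop :=
  @Structure.RelMap hgLang V _ n PUnit.unit v

/-- A family of vertices is a clique: every tuple of its members is an edge. -/
def IsClique {ι : Type*} (a : ι → V) : Prop :=
  ∀ (n : ℕ) (f : Fin n → ι), hgRel V fun j => a (f j)

/-- A family of vertices is a `k`-anticlique: no `k`-tuple of its members (with
pairwise distinct indices) is an edge. -/
def IsAnticlique (k : ℕ) {ι : Type*} (a : ι → V) : Prop :=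
  ∀ f : Fin k → ι, Function.Injective f → ¬hgRel V fun j => a (f j)

/-- The hypergraph sequence has MTP. -/
def HasMTP : Prop :=
  ∃ (k : ℕ) (bt : List ℕ → V),
    (∀ σ : ℕ → ℕ, IsClique V fun n : ℕ => bt (List.ofFn fun j : Fin n => σ j)) ∧
    (∀ η : List ℕ, IsAnticlique V k fun n : ℕ => bt (η ++ [n]))

/-- The hypergraph sequence has an `(ω, ω, 1)`-array. -/
def HasOmegaArray : Prop :=
  ∃ (k : ℕ) (bt : ℕ → ℕ → V),
    (∀ i : ℕ, IsClique V (bt i)) ∧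
    (∀ σ : ℕ → ℕ, IsAnticlique V k fun i : ℕ => bt i (σ i))

/-- The hypergraph sequence has MSOP₁. -/
def HasMSOP1 : Prop :=
  ∃ bt : List Bool → V,
    (∀ σ : ℕ → Bool, IsClique V fun n : ℕ => bt (List.ofFn fun j : Fin n => σ j)) ∧
    (∀ η₁ η₂ : List Bool, (η₁ ++ [false]) <+: η₂ →
      IsAnticlique V 2 ![bt η₂, bt (η₁ ++ [true])])

/-- The hypergraph sequence has ω-MDCTP₂. -/
def HasOmegaMDCTP2 : Prop :=
  ∃ (k : ℕ) (bt : List Bool → V),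
    (∀ σ : ℕ → Bool, IsAnticlique V k fun n : ℕ => bt (List.ofFn fun j : Fin n => σ j)) ∧
    (∀ (l : ℕ) (c : ℕ → List Bool), IsDescendingComb l c →
      IsClique V fun i : Fin l => bt (c i))

/-- The hypergraph sequence has the compatible order property. -/
def HasCompatibleOrderProperty : Prop :=
  ∃ c d : ℕ → V,
    (∀ m n : ℕ, m < n →
      IsClique V fun i : Fin (n + 1) => if (i : ℕ) ≤ m then d i else c i) ∧
    (∀ m n : ℕ, m < n → ¬hgRel V ![c m, d n])

end Hypergraph

/-!
If `p` is not co-`NSOP₁`, there are a formula `φ` and a tree of realizations of `p` on which `φ`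
is consistent along branches and inconsistent as in `SOP₁`. Joint satisfiability in `𝕄` of the
instances of `φ` at a finite list of realizations of `p` is given by formulas over `M`, hence by
a definable relation `Cl` on lists in `M_p`, although the witnesses need not realize `p`.

In an ultrapower of `M_p` over the finite subsets of a large linear order `K`, coding `K^{<ω}`
into `2^{<ω}` and pigeonholing over Skolem types produces a sequence of pairs whose two entries
have the same type over the Skolem hull of the earlier pairs, whose first entries are pairwise
incompatible for `Cl`, and whose second entries are jointly compatible. Limits of the two
sequences along a nonprincipal ultrafilter are ultrafilters on the Skolem hull with the same
definable sets. Since `Th(M_p)` is `NSOP₁`, Kim's lemma makes the two ultrafilters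
interchangeable in deciding consistency along Morley sequences; this allows one to build, by
induction on `n`, trees on `2^{<n}` whose comparable nodes are incompatible for `Cl` while
descending combs are compatible. Saturation of `𝕄` turns these finite trees into `2`-`DCTP₂`
for `φ`.
-/

section DefinableSystem

/-- A first-order calculus of definable predicates on tuples of `V`: closed under Boolean
operations, quantification over tuples, and substitution of coordinates or parameters for
coordinates. The index types may be infinite although each predicate will depend on finitely
many coordinates only. -/
structure DefinableSystem (V : Type w) where
  Dfn : ∀ {I : Type}, ((I → V) → Prop) → Prop
  top : ∀ {I : Type}, Dfn fun _ : I → V => True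
  and : ∀ {I : Type} {P Q : (I → V) → Prop}, Dfn P → Dfn Q → Dfn fun e => P e ∧ Q e
  not : ∀ {I : Type} {P : (I → V) → Prop}, Dfn P → Dfn fun e => ¬P e
  ex : ∀ {U I : Type} {P : (U → V) → (I → V) → Prop},
    (Dfn fun e : U ⊕ I → V => P (fun i => e (.inl i)) fun i => e (.inr i)) →
    Dfn fun e => ∃ k, P k e
  subst : ∀ {I J : Type} {P : (J → V) → Prop} (f : J → I ⊕ V), Dfn P →
    Dfn fun e : I → V => P fun j => Sum.elim e id (f j)

/-- The maps allowed as arguments of a definable predicate: coordinates and constants. -/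
def IsCoordOrConst {I : Type} {V : Type w} (g : (I → V) → V) : Prop :=
  (∃ i, ∀ e, g e = e i) ∨ ∃ c, ∀ e, g e = c

namespace IsCoordOrConst

variable {I J : Type} {V : Type w}

@[simp] theorem coord (i : I) : IsCoordOrConst fun e : I → V => e i := .inl ⟨i, fun _ => rfl⟩

@[simp] theorem const (c : V) : IsCoordOrConst fun _ : I → V => c := .inr ⟨c, fun _ => rfl⟩

theorem comp {g : (J → V) → V} (hg : IsCoordOrConst g) {h : J → (I → V) → V}
    (hh : ∀ j, IsCoordOrConst (h j)) : IsCoordOrConst fun e => g fun j => h j e := by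
  rcases hg with ⟨j, hj⟩ | ⟨c, hc⟩
  · simpa only [hj] using hh j
  · exact .inr ⟨c, fun e => hc _⟩

theorem getD_append_singleton (X : List V) (v₀ : V) (i : ℕ) :
    IsCoordOrConst fun e : Unit → V => (X ++ [e ()]).getD i v₀ := by
  rcases lt_or_ge i X.length with hi | hi
  · exact .inr ⟨X.getD i v₀, fun e => List.getD_append _ _ _ _ hi⟩
  · simp only [List.getD_append_right _ _ _ _ hi]
    cases i - X.length with
    | zero => exact .inl ⟨(), fun _ => rfl⟩
    | succ k => exact .inr ⟨v₀, fun _ => rfl⟩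

end IsCoordOrConst

namespace DefinableSystem

variable {V : Type w} (D : DefinableSystem V) {I U E : Type}

/-- A definable relation between tuples. -/
def DfnRel (θ : (U → V) → (E → V) → Prop) : Prop :=
  D.Dfn fun e : U ⊕ E → V => θ (fun i => e (.inl i)) fun i => e (.inr i)

/-- A definable subset of `V`. -/
def DfnSet (P : V → Prop) : Prop := D.Dfn fun e : Unit → V => P (e ())

/-- A definable binary relation on `V`. -/
def DfnRel₂ (R : V → V → Prop) : Prop := D.Dfn fun e : Bool → V => R (e false) (e true)

/-- A predicate of a finite list and a tuple whose restriction to lists of any fixed length is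
definable; stated as closure under substitution of coordinates and constants, the form in
which it is applied. -/
def DfnList (Ψ : List V → (E → V) → Prop) : Prop :=
  ∀ {I : Type} (l : List ((I → V) → V)) (k : E → (I → V) → V), (∀ g ∈ l, IsCoordOrConst g) →
    (∀ i, IsCoordOrConst (k i)) → D.Dfn fun e => Ψ (l.map fun g => g e) fun i => k i e

/-- Two ultrafilters on `V` agree if they contain the same definable sets, that is, if they
have the same global type. -/
def Agree (p q : Ultrafilter V) : Prop :=
  ∀ P : V → Prop, D.DfnSet P → ((∀ᶠ x in (p : Filter V), P x) ↔ ∀ᶠ x in (q : Filter V), P x)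

variable {D}

theorem Dfn.comp {P : (E → V) → Prop} (hP : D.Dfn P) {g : E → (I → V) → V}
    (hg : ∀ j, IsCoordOrConst (g j)) : D.Dfn fun e => P fun j => g j e := by
  have hg' : ∀ j, ∃ f : I ⊕ V, ∀ e, g j e = Sum.elim e id f := fun j => by
    rcases hg j with ⟨i, hi⟩ | ⟨c, hc⟩
    · exact ⟨.inl i, hi⟩
    · exact ⟨.inr c, hc⟩
  choose f hf using hg'
  simpa only [hf] using D.subst f hP

theorem Dfn.imp {P Q : (I → V) → Prop} (hP : D.Dfn P) (hQ : D.Dfn Q) :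
    D.Dfn fun e => P e → Q e := by
  simpa only [not_and, not_not] using D.not (D.and hP (D.not hQ))

variable (D) in
theorem dfn_const (P : Prop) : D.Dfn fun _ : I → V => P := by
  by_cases hP : P
  · simpa only [hP] using D.top
  · simpa only [hP, not_true_eq_false] using D.not (D.top (I := I))

theorem Dfn.forall_mem_finite {β : Type*} {S : Set β} (hS : S.Finite) {P : β → (I → V) → Prop}
    (hP : ∀ b ∈ S, D.Dfn (P b)) : D.Dfn fun e => ∀ b ∈ S, P b e := by
  induction S, hS using Set.Finite.induction_on with
  | empty => simpa only [Set.mem_empty_iff_false, false_imp_iff, implies_true] using D.top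
  | insert _ _ ih =>
    simpa only [Set.forall_mem_insert] using
      D.and (hP _ (Set.mem_insert _ _)) (ih fun b hb => hP b (Set.mem_insert_of_mem _ hb))

theorem DfnRel.comp {θ : (U → V) → (E → V) → Prop} (hθ : D.DfnRel θ) {g : U → (I → V) → V}
    {h : E → (I → V) → V} (hg : ∀ i, IsCoordOrConst (g i)) (hh : ∀ i, IsCoordOrConst (h i)) :
    D.Dfn fun e => θ (fun i => g i e) fun i => h i e :=
  Dfn.comp (g := Sum.elim g h) hθ (Sum.rec hg hh)

theorem DfnSet.comp {P : V → Prop} (hP : D.DfnSet P) {g : (I → V) → V}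
    (hg : IsCoordOrConst g) : D.Dfn fun e => P (g e) :=
  Dfn.comp (g := fun _ => g) hP fun _ => hg

theorem DfnRel₂.comp {R : V → V → Prop} (hR : D.DfnRel₂ R) {g h : (I → V) → V}
    (hg : IsCoordOrConst g) (hh : IsCoordOrConst h) : D.Dfn fun e => R (g e) (h e) :=
  Dfn.comp (g := fun b => Bool.rec g h b) hR (Bool.rec hg hh)

theorem dfnList_of_forall_ofFn {Φ : List V → Prop}
    (hΦ : ∀ n, D.Dfn fun e : Fin n → V => Φ (List.ofFn e)) :
    D.DfnList fun l (_ : E → V) => Φ l := by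
  intro I l k hl _
  have h := (hΦ l.length).comp (g := fun i => l[i]) fun i => hl _ (List.getElem_mem _)
  refine cast (congrArg D.Dfn (funext fun e => congrArg Φ ?_)) h
  exact List.ext_getElem (by simp) (by simp)

end DefinableSystem

end DefinableSystem

section TensorPowers

variable {X Y : Type*}

/-- The tensor product `U₁ ⊗ ⋯ ⊗ Uₙ`, an ultrafilter on lists of length `n`: for almost all
`x₁`, for almost all `x₂`, and so on. -/
noncomputable def tensorList : List (Ultrafilter X) → Ultrafilter (List X)
  | [] => pure []
  | U :: Us => U.bind fun x => (tensorList Us).map (x :: ·)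

theorem eventually_tensorList_nil {P : List X → Prop} :
    (∀ᶠ l in (tensorList ([] : List (Ultrafilter X)) : Filter (List X)), P l) ↔ P [] := Iff.rfl

theorem eventually_tensorList_cons {U : Ultrafilter X} {Us : List (Ultrafilter X)}
    {P : List X → Prop} :
    (∀ᶠ l in (tensorList (U :: Us) : Filter (List X)), P l) ↔
      ∀ᶠ x in (U : Filter X), ∀ᶠ l in (tensorList Us : Filter (List X)), P (x :: l) :=
  Iff.rfl

theorem eventually_tensorList_singleton {U : Ultrafilter X} {P : List X → Prop} :
    (∀ᶠ l in (tensorList [U] : Filter (List X)), P l) ↔ ∀ᶠ x in (U : Filter X), P [x] := Iff.rfl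

theorem eventually_tensorList_append {Us Us' : List (Ultrafilter X)} {P : List X → Prop} :
    (∀ᶠ l in (tensorList (Us ++ Us') : Filter (List X)), P l) ↔
      ∀ᶠ l in (tensorList Us : Filter (List X)),
        ∀ᶠ l' in (tensorList Us' : Filter (List X)), P (l ++ l') := by
  induction Us generalizing P with
  | nil => rfl
  | cons U Us ih => simp only [List.cons_append, eventually_tensorList_cons, ih]

theorem eventually_tensorList_length (Us : List (Ultrafilter X)) :
    ∀ᶠ l in (tensorList Us : Filter (List X)), l.length = Us.length := by
  induction Us with
  | nil => rfl
  | cons U Us ih =>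
    simpa only [eventually_tensorList_cons, List.length_cons, Nat.add_right_cancel_iff]
      using .of_forall fun _ => ih

theorem eventually_tensorList_replicate_length (p : Ultrafilter X) (n : ℕ) :
    ∀ᶠ l in (tensorList (List.replicate n p) : Filter (List X)), l.length = n := by
  simpa only [List.length_replicate] using eventually_tensorList_length (List.replicate n p)

theorem eventually_tensorList_forall_mem {p : Ultrafilter X} {P : X → Prop}
    (hP : ∀ᶠ x in (p : Filter X), P x) (n : ℕ) :
    ∀ᶠ l in (tensorList (List.replicate n p) : Filter (List X)), ∀ x ∈ l, P x := by
  induction n with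
  | zero => exact List.forall_mem_nil P
  | succ n ih =>
    rw [List.replicate_succ, eventually_tensorList_cons]
    filter_upwards [hP] with x hx
    filter_upwards [ih] with l hl
    exact List.forall_mem_cons.2 ⟨hx, hl⟩

theorem eventually_tensorList_map {f : X → Y} {Us : List (Ultrafilter X)}
    {P : List Y → Prop} :
    (∀ᶠ l in (tensorList (Us.map (Ultrafilter.map f)) : Filter (List Y)), P l) ↔
      ∀ᶠ l in (tensorList Us : Filter (List X)), P (l.map f) := by
  induction Us generalizing P with
  | nil => rfl
  | cons U Us ih => simp only [List.map_cons, eventually_tensorList_cons, ih,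
      Ultrafilter.coe_map, Filter.eventually_map]

theorem eventually_tensorList_flatten {p : Ultrafilter X} {n d : ℕ} {P : List X → Prop} :
    (∀ᶠ l in (tensorList (List.replicate (d * n) p) : Filter (List X)), P l) ↔
      ∀ᶠ ls in (tensorList (List.replicate d (tensorList (List.replicate n p))) :
          Filter (List (List X))),
        P ls.flatten := by
  induction d generalizing P with
  | zero => simp only [Nat.zero_mul, List.replicate_zero, eventually_tensorList_nil,
      List.flatten_nil]
  | succ d ih =>
    simp only [Nat.succ_mul, Nat.add_comm _ n, List.replicate_add, List.replicate_succ,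
      eventually_tensorList_append, eventually_tensorList_cons, ih, List.flatten_cons]

theorem eventually_forall_mem_list {β : Type*} {F : Filter X} {l : List β} {P : β → X → Prop}
    (h : ∀ b ∈ l, ∀ᶠ x in F, P b x) : ∀ᶠ x in F, ∀ b ∈ l, P b x :=
  (Filter.eventually_all_finite l.finite_toSet).2 h

end TensorPowers

section SOP1Trees

/-- The tree with root `c` whose subtrees above `[false]` and `[true]` are `t₀` and `t₁`. -/
def joinTrees {X : Type*} (c : X) (t₀ t₁ : List Bool → X) : List Bool → X
  | [] => c
  | false :: η => t₀ η
  | true :: η => t₁ η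

/-- A finite SOP₁ tree of depth `d`: the conditions `θ · x` along each branch are jointly
satisfiable, while `J` holds between each node above `e⌢⟨0⟩` and the node `e⌢⟨1⟩`; in
SOP₁ proper, `J` is incompatibility. All nodes are required to satisfy `N`, which lets two
trees be glued below a common root. -/
structure IsSOP1Tree {K X : Type*} (θ : K → X → Prop) (J : X → X → Prop) (N : X → Prop) (d : ℕ)
    (t : List Bool → X) : Prop where
  branch : ∀ σ : List Bool, σ.length = d → ∃ k, ∀ η, η <+: σ → θ k (t η)
  node : ∀ η : List Bool, η.length ≤ d → N (t η)
  split : ∀ η₁ η₂ : List Bool, η₁ ++ [false] <+: η₂ → η₂.length ≤ d →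
    J (t η₂) (t (η₁ ++ [true]))

/-- Two parameters whose conditions have no common solution. -/
def Incompatible {K X : Type*} (θ : K → X → Prop) (x x' : X) : Prop := ¬∃ k, θ k x ∧ θ k x'

namespace IsSOP1Tree

variable {K X : Type*} {θ : K → X → Prop} {J : X → X → Prop} {N : X → Prop} {d : ℕ}

theorem glue {c : X} {t₀ t₁ : List Bool → X} (hc : N c)
    (h₀ : IsSOP1Tree (fun k x => θ k c ∧ θ k x) J (fun x => N x ∧ J x (t₁ [])) d t₀)
    (h₁ : IsSOP1Tree (fun k x => θ k c ∧ θ k x) J N d t₁) :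
    IsSOP1Tree θ J N (d + 1) (joinTrees c t₀ t₁) where
  branch := by
    have extend {k σ b} {t : List Bool → X} (hk : ∀ η, η <+: σ → θ k c ∧ θ k (t η))
        (ht : ∀ η, joinTrees c t₀ t₁ (b :: η) = t η) :
        ∀ η, η <+: b :: σ → θ k (joinTrees c t₀ t₁ η) := by
      rintro (_ | ⟨b', η⟩) hη
      · exact (hk [] List.nil_prefix).1
      · obtain ⟨rfl, hησ⟩ := List.cons_prefix_cons.1 hη
        simpa only [ht] using (hk η hησ).2
    rintro (_ | ⟨b, σ⟩) hσ
    · cases hσ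
    · cases b
      · exact (h₀.branch σ (Nat.succ_inj.1 hσ)).imp fun k hk => extend hk fun _ => rfl
      · exact (h₁.branch σ (Nat.succ_inj.1 hσ)).imp fun k hk => extend hk fun _ => rfl
  node := by
    rintro (_ | ⟨_ | _, η⟩) hη
    · exact hc
    · exact (h₀.node η (Nat.succ_le_succ_iff.1 hη)).1
    · exact h₁.node η (Nat.succ_le_succ_iff.1 hη)
  split := by
    rintro (_ | ⟨b, η₁⟩) (_ | ⟨b', η₂⟩) h hη
    · simp at h
    · obtain ⟨rfl, -⟩ := List.cons_prefix_cons.1 h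
      exact (h₀.node η₂ (Nat.succ_le_succ_iff.1 hη)).2
    · simp at h
    · obtain ⟨rfl, h'⟩ := List.cons_prefix_cons.1 h
      cases b
      · exact h₀.split η₁ η₂ h' (Nat.succ_le_succ_iff.1 hη)
      · exact h₁.split η₁ η₂ h' (Nat.succ_le_succ_iff.1 hη)

theorem map {K' X' : Type*} {θ' : K' → X' → Prop} {J' : X' → X' → Prop} {N' : X' → Prop}
    {t : List Bool → X} (h : IsSOP1Tree θ J N d t) (f : X → X') (g : K → K')
    (hθ : ∀ k x, N x → θ k x → θ' (g k) (f x)) (hJ : ∀ x x', N x → J x x' → J' (f x) (f x'))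
    (hN : ∀ x, N x → N' (f x)) : IsSOP1Tree θ' J' N' d fun η => f (t η) where
  branch σ hσ := (h.branch σ hσ).elim fun k hk =>
    ⟨g k, fun η hη => hθ k _ (h.node η (hη.length_le.trans hσ.le)) (hk η hη)⟩
  node η hη := hN _ (h.node η hη)
  split η₁ η₂ h₁₂ hη := hJ _ _ (h.node η₂ hη) (h.split η₁ η₂ h₁₂ hη)

theorem of_depth_zero {t : List Bool → X} {k : K} (hθ : θ k (t [])) (hN : N (t [])) :
    IsSOP1Tree θ J N 0 t where
  branch σ hσ := ⟨k, by simpa [List.length_eq_zero_iff.1 hσ] using hθ⟩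
  node η hη := by simpa [List.length_eq_zero_iff.1 (Nat.le_zero.1 hη)] using hN
  split η₁ η₂ h hη := by simp [List.length_eq_zero_iff.1 (Nat.le_zero.1 hη)] at h

end IsSOP1Tree

namespace DefinableSystem

variable {V : Type w} {D : DefinableSystem V} {I U E : Type}

variable (D) in
/-- NSOP₁ for a definable system, in finitary form. -/
def NSOP1 : Prop :=
  ∀ {U E : Type} (θ : (U → V) → (E → V) → Prop), D.DfnRel θ →
    ∃ d, ¬∃ t, IsSOP1Tree θ (Incompatible θ) (fun _ => True) d t

theorem Dfn.exists_family {β : Type} {P : (β → E → V) → (I → V) → Prop}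
    (hP : D.Dfn fun e : β × E ⊕ I → V => P (fun b i => e (.inl (b, i))) fun i => e (.inr i)) :
    D.Dfn fun e => ∃ t, P t e := by
  refine cast (congrArg D.Dfn (funext fun e => propext ?_))
    (D.ex (P := fun k => P fun b i => k (b, i)) hP)
  exact (Equiv.curry β E V).exists_congr_left

theorem DfnRel.incompatible {θ : (U → V) → (E → V) → Prop} (hθ : D.DfnRel θ) :
    D.DfnRel (Incompatible θ) :=
  D.not <| D.ex
    (P := fun k (e : E ⊕ E → V) => θ k (fun i => e (.inl i)) ∧ θ k fun i => e (.inr i)) <|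
    D.and (hθ.comp (fun _ => .coord _) fun _ => .coord _)
      (hθ.comp (fun _ => .coord _) fun _ => .coord _)

theorem DfnRel.isSOP1Tree {θ : (U → V) → (E → V) → Prop} (hθ : D.DfnRel θ)
    {J : (E → V) → (E → V) → Prop} (hJ : D.DfnRel J) {N : (E → V) → Prop} (hN : D.Dfn N) (d : ℕ)
    {t : List Bool → E → (I → V) → V} (ht : ∀ η i, IsCoordOrConst (t η i)) :
    D.Dfn fun e => IsSOP1Tree θ J N d fun η i => t η i e := by
  have hfin (n : ℕ) : {η : List Bool | η.length ≤ n}.Finite := List.finite_length_le Bool n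
  have hbranch : D.Dfn fun e => ∀ σ ∈ {σ : List Bool | σ.length = d}, ∃ k,
      ∀ η ∈ {η | η <+: σ}, θ k fun i => t η i e := by
    refine .forall_mem_finite ((hfin d).subset fun σ hσ => hσ.le) fun σ _ => ?_
    refine D.ex (P := fun k e => ∀ η ∈ {η | η <+: σ}, θ k fun i => t η i e) ?_
    refine .forall_mem_finite ((hfin _).subset fun η hη => hη.length_le) fun η _ => ?_
    exact hθ.comp (fun _ => .coord _) fun i => (ht η i).comp fun _ => .coord _
  have hnode : D.Dfn fun e => ∀ η ∈ {η : List Bool | η.length ≤ d}, N fun i => t η i e :=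
    .forall_mem_finite (hfin d) fun η _ => hN.comp (ht η)
  have hsplit : D.Dfn fun e => ∀ η₁ ∈ {η : List Bool | η.length ≤ d},
      ∀ η₂ ∈ {η₂ | η₁ ++ [false] <+: η₂ ∧ η₂.length ≤ d},
        J (fun i => t η₂ i e) fun i => t (η₁ ++ [true]) i e :=
    .forall_mem_finite (hfin d) fun η₁ _ =>
      .forall_mem_finite ((hfin d).subset fun η₂ hη => hη.2) fun η₂ _ => hJ.comp (ht _) (ht _)
  refine cast (congrArg D.Dfn (funext fun e => propext ⟨?_, ?_⟩))
    (D.and hbranch (D.and hnode hsplit))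
  · rintro ⟨h, h', h''⟩
    exact ⟨h, h', fun η₁ η₂ h₁₂ hη =>
      h'' η₁ ((List.prefix_append _ _).trans h₁₂ |>.length_le.trans hη) η₂ ⟨h₁₂, hη⟩⟩
  · rintro ⟨h, h', h''⟩
    exact ⟨h, h', fun η₁ _ η₂ hη => h'' η₁ η₂ hη.1 hη.2⟩

theorem eventually_exists_isSOP1Tree {Q R : Ultrafilter (E → V)}
    (hQR : ∀ P : (E → V) → Prop, D.Dfn P → (∀ᶠ c in (Q : Filter (E → V)), P c) →
      ∀ᶠ c in (R : Filter (E → V)), P c)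
    {J : (E → V) → (E → V) → Prop} (hJ : D.DfnRel J)
    (hRQ : ∀ᶠ c₁ in (R : Filter (E → V)), ∀ᶠ c₀ in (Q : Filter (E → V)), J c₀ c₁) (d : ℕ)
    {θ : (U → V) → (E → V) → Prop} (hθ : D.DfnRel θ) {N : (E → V) → Prop} (hN : D.Dfn N)
    (hcons : ∀ᶠ L in (tensorList (List.replicate (d + 1) Q) : Filter (List (E → V))),
      ∃ k, ∀ x ∈ L, θ k x)
    (hQN : ∀ᶠ c in (Q : Filter (E → V)), N c) :
    ∀ᶠ c in (Q : Filter (E → V)), ∃ t, IsSOP1Tree θ J N d (Function.update t [] c) := by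
  induction d generalizing θ N with
  | zero =>
    rw [List.replicate_succ, List.replicate_zero, eventually_tensorList_singleton] at hcons
    filter_upwards [hcons, hQN] with c ⟨k, hk⟩ hc
    exact ⟨fun _ => c, .of_depth_zero (k := k) (hk c (List.mem_singleton_self c)) hc⟩
  | succ d ih =>
    rw [List.replicate_succ, eventually_tensorList_cons] at hcons
    filter_upwards [hcons, hQN] with c hc hNc
    have hθc : D.DfnRel fun k x => θ k c ∧ θ k x :=
      D.and (hθ.comp (fun _ => .coord _) fun _ => .const _)
        (hθ.comp (fun _ => .coord _) fun _ => .coord _)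
    have hconsc : ∀ᶠ L in (tensorList (List.replicate (d + 1) Q) : Filter (List (E → V))),
        ∃ k, ∀ x ∈ L, θ k c ∧ θ k x := by
      filter_upwards [hc] with L ⟨k, hk⟩
      exact ⟨k, fun x hx => ⟨hk c List.mem_cons_self, hk x (List.mem_cons_of_mem c hx)⟩⟩
    have hR : ∀ᶠ c₁ in (R : Filter (E → V)), ∃ t,
        IsSOP1Tree (fun k x => θ k c ∧ θ k x) J N d (Function.update t [] c₁) := by
      refine hQR _ (.exists_family ?_) (ih hθc hN hconsc hQN)
      refine hθc.isSOP1Tree hJ hN d (t := fun η i (e : List Bool × E ⊕ E → V) =>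
        Function.update (fun η i => e (.inl (η, i))) [] (fun i => e (.inr i)) η i) ?_
      rintro (_ | _) i
      exacts [.coord _, .coord _]
    obtain ⟨c₁, ⟨t₁, h₁⟩, hJ₁⟩ := (hR.and hRQ).exists
    have hN' : D.Dfn fun x => N x ∧ J x c₁ :=
      D.and hN (hJ.comp (fun _ => .coord _) fun _ => .const _)
    obtain ⟨c₀, t₀, h₀⟩ := (ih hθc hN' hconsc (hQN.and hJ₁)).exists
    refine ⟨joinTrees c (Function.update t₀ [] c₀) (Function.update t₁ [] c₁), ?_⟩
    rw [Function.update_eq_self_iff.2]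
    exacts [.glue hNc h₀ h₁, rfl]

end DefinableSystem

end SOP1Trees

section KimLemma

variable {V : Type w} {D : DefinableSystem V} {U : Type}

/-- The conjunction of the instances of `φ` at the first `n` entries of a sequence; sequences
encode tuples whose length may vary. -/
def ForallBelow (φ : (U → V) → V → Prop) (n : ℕ) (k : U → V) (e : ℕ → V) : Prop :=
  ∀ i < n, φ k (e i)

/-- The encoding of the list `X ++ L` as a sequence, continued by the constant `v₀`. -/
def appendSeq (X : List V) (v₀ : V) (L : List V) (i : ℕ) : V := (X ++ L).getD i v₀

theorem forallBelow_appendSeq {φ : (U → V) → V → Prop} {X : List V} {v₀ : V} {n : ℕ}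
    {L : List V} (hL : L.length = n) {k : U → V} :
    ForallBelow φ (X.length + n) k (appendSeq X v₀ L) ↔ ∀ x ∈ X ++ L, φ k x := by
  rw [← hL, ← List.length_append, List.forall_mem_iff_forall_getElem]
  exact forall₂_congr fun i hi => by rw [appendSeq, List.getD_eq_getElem _ _ hi]

theorem eventually_exists_forallBelow_blocks {p : Ultrafilter V} {φ : (U → V) → V → Prop}
    {X : List V} (v₀ : V) {n d : ℕ}
    (hcons : ∀ᶠ L in (tensorList (List.replicate (d * n) p) : Filter (List V)),
      ∃ k, ∀ x ∈ X ++ L, φ k x) :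
    ∀ᶠ M in (tensorList (List.replicate d
        ((tensorList (List.replicate n p)).map (appendSeq X v₀))) : Filter (List (ℕ → V))),
      ∃ k, ∀ e ∈ M, ForallBelow φ (X.length + n) k e := by
  rw [← List.map_replicate, eventually_tensorList_map]
  filter_upwards [eventually_tensorList_flatten.1 hcons, eventually_tensorList_forall_mem
    (eventually_tensorList_replicate_length p n) d] with M ⟨k, hk⟩ hlen
  rw [List.forall_mem_append] at hk
  refine ⟨k, List.forall_mem_map.2 fun L hL => (forallBelow_appendSeq (hlen L hL)).2 ?_⟩
  exact List.forall_mem_append.2 ⟨hk.1, fun x hx => hk.2 x (List.mem_flatten_of_mem hL hx)⟩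

theorem eventually_incompatible_forallBelow {p q : Ultrafilter V} {φ : (U → V) → V → Prop}
    {X : List V} (v₀ : V) {l : ℕ}
    (hincons : ∀ᶠ c in (q : Filter V),
      ∀ᶠ L in (tensorList (List.replicate (l + 1) p) : Filter (List V)),
        ¬∃ k, ∀ x ∈ X ++ c :: L, φ k x) :
    ∀ᶠ L' in (tensorList (List.replicate l p ++ [q]) : Filter (List V)),
      ∀ᶠ L in (tensorList (List.replicate (l + 1) p) : Filter (List V)),
        Incompatible (ForallBelow φ (X.length + (l + 1))) (appendSeq X v₀ L)
          (appendSeq X v₀ L') := by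
  simp only [eventually_tensorList_append, eventually_tensorList_singleton]
  filter_upwards [eventually_tensorList_replicate_length p l] with L' hL'
  filter_upwards [hincons] with c hc
  filter_upwards [hc, eventually_tensorList_replicate_length p (l + 1)] with L hL hlen
  rintro ⟨k, hk, hk'⟩
  rw [forallBelow_appendSeq hlen, List.forall_mem_append] at hk
  rw [forallBelow_appendSeq (by simp [hL']), List.forall_mem_append, List.forall_mem_append]
    at hk'
  exact hL ⟨k, List.forall_mem_append.2
    ⟨hk.1, List.forall_mem_cons.2 ⟨hk'.2.2 c (List.mem_singleton_self c), hk.2⟩⟩⟩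

namespace DefinableSystem

theorem DfnRel.forallBelow {φ : (U → V) → V → Prop}
    (hφ : D.DfnRel fun k (e : Unit → V) => φ k (e ())) (n : ℕ) : D.DfnRel (ForallBelow φ n) :=
  Dfn.forall_mem_finite (Set.finite_lt_nat n) fun i _ =>
    hφ.comp (h := fun _ (e : U ⊕ ℕ → V) => e (.inr i)) (fun _ => .coord _) fun _ => .coord _

theorem Agree.eventually_appendSeq {p q : Ultrafilter V} (hpq : D.Agree p q)
    {P : (ℕ → V) → Prop} (hP : D.Dfn P) {X : List V} {v₀ : V} {l : ℕ}
    (h : ∀ᶠ L in (tensorList (List.replicate (l + 1) p) : Filter (List V)),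
      P (appendSeq X v₀ L)) :
    ∀ᶠ L in (tensorList (List.replicate l p ++ [q]) : Filter (List V)),
      P (appendSeq X v₀ L) := by
  simp only [List.replicate_succ', eventually_tensorList_append,
    eventually_tensorList_singleton] at h ⊢
  filter_upwards [h] with L hL
  have happend (c : V) : appendSeq X v₀ (L ++ [c]) = fun i => ((X ++ L) ++ [c]).getD i v₀ :=
    funext fun i => by rw [appendSeq, List.append_assoc]
  have hset : D.DfnSet fun c => P (appendSeq X v₀ (L ++ [c])) := by
    simp only [happend]
    exact hP.comp fun i => .getD_append_singleton (X ++ L) v₀ i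
  exact (hpq _ hset).1 hL

theorem exists_isSOP1Tree_forallBelow {p q : Ultrafilter V} (hpq : D.Agree p q)
    {φ : (U → V) → V → Prop} (hφ : D.DfnRel fun k (e : Unit → V) => φ k (e ()))
    {X : List V} {l d : ℕ}
    (hcons : ∀ᶠ L in (tensorList (List.replicate ((d + 1) * (l + 1)) p) : Filter (List V)),
      ∃ k, ∀ x ∈ X ++ L, φ k x)
    (hincons : ∀ᶠ c in (q : Filter V),
      ∀ᶠ L in (tensorList (List.replicate (l + 1) p) : Filter (List V)),
        ¬∃ k, ∀ x ∈ X ++ c :: L, φ k x) :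
    ∃ t, IsSOP1Tree (ForallBelow φ (X.length + (l + 1)))
      (Incompatible (ForallBelow φ (X.length + (l + 1)))) (fun _ => True) d t := by
  obtain ⟨v₀, -⟩ := hincons.exists
  have hθ : D.DfnRel (ForallBelow φ (X.length + (l + 1))) := DfnRel.forallBelow hφ _
  obtain ⟨c, t, ht⟩ := (eventually_exists_isSOP1Tree
    (Q := (tensorList (List.replicate (l + 1) p)).map (appendSeq X v₀))
    (R := (tensorList (List.replicate l p ++ [q])).map (appendSeq X v₀))
    (fun P hP => hpq.eventually_appendSeq hP) hθ.incompatible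
    (eventually_incompatible_forallBelow v₀ hincons) d hθ (D.dfn_const True)
    (eventually_exists_forallBelow_blocks v₀ hcons) (.of_forall fun _ => trivial)).exists
  exact ⟨_, ht⟩

/-- Kim's lemma: whether the instances of `φ` along a Morley sequence are consistent depends
only on the type, not on the ultrafilter generating the sequence. -/
theorem NSOP1.eventually_exists_of_agree (hD : D.NSOP1) {p q : Ultrafilter V}
    (hpq : D.Agree p q) {φ : (U → V) → V → Prop}
    (hφ : D.DfnRel fun k (e : Unit → V) => φ k (e ()))
    (h : ∀ n, ∀ᶠ L in (tensorList (List.replicate n p) : Filter (List V)), ∃ k, ∀ x ∈ L, φ k x)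
    (n : ℕ) :
    ∀ᶠ L in (tensorList (List.replicate n q) : Filter (List V)), ∃ k, ∀ x ∈ L, φ k x := by
  suffices hmix : ∀ j l, ∀ᶠ L in (tensorList (List.replicate j q) : Filter (List V)),
      ∀ᶠ L' in (tensorList (List.replicate l p) : Filter (List V)), ∃ k, ∀ x ∈ L ++ L', φ k x by
    simpa only [List.replicate_zero, eventually_tensorList_nil, List.append_nil] using hmix n 0
  intro j
  induction j with
  | zero => exact h
  | succ j ih =>
    intro l
    by_contra hcon
    obtain ⟨d, hd⟩ := hD _ (DfnRel.forallBelow hφ (j + (l + 1)))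
    have hincons : ∀ᶠ X in (tensorList (List.replicate j q) : Filter (List V)),
        ∀ᶠ c in (q : Filter V), ∀ᶠ L in (tensorList (List.replicate (l + 1) p) : Filter (List V)),
          ¬∃ k, ∀ x ∈ X ++ c :: L, φ k x := by
      simp only [← Ultrafilter.eventually_not, List.replicate_succ',
        eventually_tensorList_append, eventually_tensorList_singleton] at hcon ⊢
      filter_upwards [hcon] with X hX
      filter_upwards [hX] with c hc
      filter_upwards [hc] with L hL
      refine .of_forall fun x ⟨k, hk⟩ => hL ⟨k, fun y hy => hk y ?_⟩
      simp only [List.append_assoc, List.cons_append, List.nil_append, List.mem_append,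
        List.mem_cons] at hy ⊢
      tauto
    obtain ⟨X, hX, hXincons, hlen⟩ := ((ih ((d + 1) * (l + 1))).and
      (hincons.and (eventually_tensorList_replicate_length q j))).exists
    exact hd (hlen ▸ exists_isSOP1Tree_forallBelow hpq hφ hX hXincons)

end DefinableSystem

end KimLemma

section CombTrees

/-- The combs of a tree formed by two subtrees of height `n` with combs `𝒞` below a common
root, except for the comb consisting of the root: a comb of either subtree, or a comb of the
left subtree preceded by one node of the right subtree. -/
def joinCombs (n : ℕ) (𝒞 : Set (List (List Bool))) : Set (List (List Bool)) :=
  List.map (false :: ·) '' 𝒞 ∪ List.map (true :: ·) '' 𝒞 ∪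
    Set.image2 (fun ν C => (true :: ν) :: C.map (false :: ·)) {ν | ν.length < n} 𝒞

/-- The descending combs of nodes of length less than `n`, listed from right to left. -/
def combs : ℕ → Set (List (List Bool))
  | 0 => {[]}
  | n + 1 => insert [ [] ] (joinCombs n (combs n))

theorem nil_mem_combs (n : ℕ) : [] ∈ combs n := by
  induction n with
  | zero => rfl
  | succ n ih => exact .inr (.inl (.inl ⟨[], ih, rfl⟩))

theorem map_cons_mem_combs_succ {n : ℕ} {C : List (List Bool)} (hC : C ∈ combs n) (b : Bool) :
    C.map (b :: ·) ∈ combs (n + 1) := by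
  cases b
  exacts [.inr (.inl (.inl ⟨C, hC, rfl⟩)), .inr (.inl (.inr ⟨C, hC, rfl⟩))]

theorem cons_map_cons_mem_combs_succ {n : ℕ} {ν : List Bool} (hν : ν.length < n)
    {C : List (List Bool)} (hC : C ∈ combs n) :
    (true :: ν) :: C.map (false :: ·) ∈ combs (n + 1) :=
  .inr (.inr ⟨ν, hν, C, hC, rfl⟩)

theorem finite_joinCombs {n : ℕ} {𝒞 : Set (List (List Bool))} (h𝒞 : 𝒞.Finite) :
    (joinCombs n 𝒞).Finite :=
  ((h𝒞.image _).union (h𝒞.image _)).union (.image2 _ (List.finite_length_lt Bool n) h𝒞)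

theorem finite_combs (n : ℕ) : (combs n).Finite := by
  induction n with
  | zero => exact Set.finite_singleton _
  | succ n ih => exact (finite_joinCombs ih).insert _

theorem singleton_mem_joinCombs {n : ℕ} {𝒞 : Set (List (List Bool))}
    (h𝒞 : ∀ η : List Bool, η.length < n → [η] ∈ 𝒞) {η : List Bool} (hη : η ≠ [])
    (hn : η.length ≤ n) : [η] ∈ joinCombs n 𝒞 := by
  match η, hη with
  | false :: η, _ => exact .inl (.inl ⟨[η], h𝒞 η hn, rfl⟩)
  | true :: η, _ => exact .inl (.inr ⟨[η], h𝒞 η hn, rfl⟩)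

theorem singleton_mem_combs {n : ℕ} {η : List Bool} (hη : η.length < n) : [η] ∈ combs n := by
  induction n generalizing η with
  | zero => cases hη
  | succ n ih =>
    rcases eq_or_ne η [] with rfl | hne
    · exact .inl rfl
    · exact .inr (singleton_mem_joinCombs (fun _ => ih) hne (Nat.lt_succ_iff.1 hη))

theorem ne_nil_of_mem_joinCombs {n : ℕ} {𝒞 : Set (List (List Bool))} {C : List (List Bool)}
    (hC : C ∈ joinCombs n 𝒞) {η : List Bool} (hη : η ∈ C) : η ≠ [] := by
  rintro rfl
  rcases hC with (⟨C, -, rfl⟩ | ⟨C, -, rfl⟩) | ⟨ν, -, C, -, rfl⟩ <;> simp at hη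

/-- A tree of elements of `X` whose nodes in `N` are pairwise unrelated by `R` along branches,
while `Φ` holds of its combs in `𝒞`. -/
structure IsCombTree {X : Type*} (R : X → X → Prop) (Φ : List X → Prop) (N : Set (List Bool))
    (𝒞 : Set (List (List Bool))) (T : List Bool → X) : Prop where
  not_rel : ∀ η ∈ N, ∀ ν ∈ N, StrictPrefix η ν → ¬R (T η) (T ν)
  comb : ∀ C ∈ 𝒞, Φ (C.map T)

/-- An `IsCombTree` on all nodes and combs of the tree of height `n`. -/
abbrev IsFullCombTree {X : Type*} (R : X → X → Prop) (Φ : List X → Prop) (n : ℕ) :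
    (List Bool → X) → Prop :=
  IsCombTree R Φ {η | η.length < n} (combs n)

/-- An `IsCombTree` on the tree of height `n + 1` with its root removed. -/
abbrev IsRootlessCombTree {X : Type*} (R : X → X → Prop) (Φ : List X → Prop) (n : ℕ) :
    (List Bool → X) → Prop :=
  IsCombTree R Φ {η | η ≠ [] ∧ η.length ≤ n} (joinCombs n (combs n))

namespace IsCombTree

variable {X : Type*} {R : X → X → Prop} {Φ Φ' : List X → Prop} {n : ℕ} {T : List Bool → X}

theorem mono {N : Set (List Bool)} {𝒞 : Set (List (List Bool))} (hT : IsCombTree R Φ N 𝒞 T)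
    (hΦ : ∀ C, Φ C → Φ' C) : IsCombTree R Φ' N 𝒞 T :=
  ⟨hT.not_rel, fun C hC => hΦ _ (hT.comb C hC)⟩

theorem joinTrees {T₀ T₁ : List Bool → X} (c : X) (h₀ : IsFullCombTree R Φ n T₀)
    (h₁ : IsFullCombTree R (fun C => ∀ C₀ ∈ combs n, Φ (C ++ C₀.map T₀)) n T₁) :
    IsRootlessCombTree R Φ n (joinTrees c T₀ T₁) where
  not_rel := by
    rintro (_ | ⟨b, η⟩) ⟨hη, hηn⟩ (_ | ⟨b', ν⟩) ⟨hν, hνn⟩ ⟨hpre, hne⟩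
    · exact (hη rfl).elim
    · exact (hη rfl).elim
    · exact (hν rfl).elim
    · obtain ⟨rfl, hpre'⟩ := List.cons_prefix_cons.1 hpre
      have hην : StrictPrefix η ν := ⟨hpre', fun h => hne (h ▸ rfl)⟩
      cases b
      exacts [h₀.not_rel η hηn ν hνn hην, h₁.not_rel η hηn ν hνn hην]
  comb := by
    have hleft (C : List (List Bool)) :
        (C.map (false :: ·)).map (NSOP3Paper.joinTrees c T₀ T₁) = C.map T₀ := List.map_map
    have hright (C : List (List Bool)) :
        (C.map (true :: ·)).map (NSOP3Paper.joinTrees c T₀ T₁) = C.map T₁ := List.map_map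
    rintro _ ((⟨C, hC, rfl⟩ | ⟨C, hC, rfl⟩) | ⟨ν, hν, C, hC, rfl⟩)
    · simpa only [hleft] using h₀.comb C hC
    · simpa only [hright, List.map_nil, List.append_nil] using
        h₁.comb C hC [] (nil_mem_combs n)
    · rw [List.map_cons, hleft]
      exact h₁.comb [ν] (singleton_mem_combs hν) C hC

theorem of_singleton (hT : IsRootlessCombTree R Φ n T) {η : List Bool} (hη : η ≠ [])
    (hn : η.length ≤ n) : Φ [T η] :=
  hT.comb [η] (singleton_mem_joinCombs (fun _ => singleton_mem_combs) hη hn)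

theorem update_root {x : X} (hT : IsRootlessCombTree R Φ n T)
    (hR : ∀ η : List Bool, η ≠ [] → η.length ≤ n → ¬R x (T η)) (hx : Φ [x]) :
    IsFullCombTree R Φ (n + 1) (Function.update T [] x) where
  not_rel η hη ν hν := by
    rintro ⟨hpre, hne⟩
    have hν' : ν ≠ [] := by
      rintro rfl
      exact hne (List.prefix_nil.1 hpre)
    rw [Function.update_of_ne hν']
    rcases eq_or_ne η [] with rfl | hη'
    · rw [Function.update_self]
      exact hR ν hν' (Nat.lt_succ_iff.1 hν)
    · rw [Function.update_of_ne hη']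
      exact hT.not_rel η ⟨hη', Nat.lt_succ_iff.1 hη⟩ ν ⟨hν', Nat.lt_succ_iff.1 hν⟩ ⟨hpre, hne⟩
  comb := by
    rintro C (rfl | hC)
    · simpa only [List.map_singleton, Function.update_self] using hx
    · rw [List.map_congr_left fun η hη =>
        Function.update_of_ne (ne_nil_of_mem_joinCombs hC hη) x T]
      exact hT.comb C hC

end IsCombTree

end CombTrees

theorem exists_ultrafilter_of_directed {ι α : Type*} [Nonempty ι] {s : ι → Set α}
    (hdir : Directed (· ⊇ ·) s) (hs : ∀ i, (s i).Nonempty) :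
    ∃ U : Ultrafilter α, ∀ i, s i ∈ U := by
  have : (⨅ i, Filter.principal (s i)).NeBot :=
    Filter.iInf_neBot_of_directed'
      (fun i j => (hdir i j).imp fun k hk =>
        ⟨Filter.principal_mono.2 hk.1, Filter.principal_mono.2 hk.2⟩)
      fun i => Filter.principal_neBot_iff.2 (hs i)
  exact ⟨.of _, fun i =>
    Ultrafilter.of_le _ (Filter.mem_iInf_of_mem i (Filter.mem_principal_self _))⟩

section Amalgamation

namespace DefinableSystem

variable {V : Type w} {D : DefinableSystem V} {p : Ultrafilter V} {R : V → V → Prop}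
  {n : ℕ} {ι : Type}

variable (D) in
/-- A definable predicate of lists and tuples holding of `p^{⊗l}`-almost every list and
`W`-almost every tuple, for every `l`. -/
structure IsGeneric (p : Ultrafilter V) (W : Ultrafilter (ι → V))
    (Ψ : List V → (ι → V) → Prop) : Prop where
  dfnList : D.DfnList Ψ
  eventually : ∀ l, ∀ᶠ C in (tensorList (List.replicate l p) : Filter (List V)),
    ∀ᶠ B in (W : Filter (ι → V)), Ψ C B

variable (D) in
/-- Any generic predicate holds of the combs of an `R`-free tree of height `n`. -/
def HasCombTrees (p : Ultrafilter V) (R : V → V → Prop) (n : ℕ) : Prop :=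
  ∀ {ι : Type} {W : Ultrafilter (ι → V)} {Ψ : List V → (ι → V) → Prop}, D.IsGeneric p W Ψ →
    ∀ᶠ B in (W : Filter (ι → V)), ∃ T, IsFullCombTree R (fun C => Ψ C B) n T

variable {W : Ultrafilter (ι → V)} {Ψ Ψ' : List V → (ι → V) → Prop}

variable (D p W) in
theorem IsGeneric.true : D.IsGeneric p W fun _ _ => True :=
  ⟨fun _ _ _ _ => D.top, fun _ => .of_forall fun _ => .of_forall fun _ => trivial⟩

theorem IsGeneric.and (hΨ : D.IsGeneric p W Ψ) (hΨ' : D.IsGeneric p W Ψ') :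
    D.IsGeneric p W fun C B => Ψ C B ∧ Ψ' C B where
  dfnList l k hl hk := D.and (hΨ.dfnList l k hl hk) (hΨ'.dfnList l k hl hk)
  eventually l := by
    filter_upwards [hΨ.eventually l, hΨ'.eventually l] with C hC hC' using hC.and hC'

theorem IsGeneric.eventually_append_left (hΨ : D.IsGeneric p W Ψ) (l N : ℕ) :
    ∀ᶠ C' in (tensorList (List.replicate l p) : Filter (List V)),
      D.IsGeneric p W fun C B => C.length ≤ N → Ψ (C' ++ C) B := by
  have hshort : ∀ᶠ C' in (tensorList (List.replicate l p) : Filter (List V)), ∀ m ≤ N,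
      ∀ᶠ C in (tensorList (List.replicate m p) : Filter (List V)),
        ∀ᶠ B in (W : Filter (ι → V)), Ψ (C' ++ C) B := by
    refine (Filter.eventually_all_finite (Set.finite_le_nat N)).2 fun m _ => ?_
    simpa only [List.replicate_add, eventually_tensorList_append] using hΨ.eventually (l + m)
  filter_upwards [hshort] with C' hC'
  refine ⟨fun C k hC hk => ?_, fun m => ?_⟩
  · have happ := hΨ.dfnList (C'.map (fun c _ => c) ++ C) k
      (List.forall_mem_append.2 ⟨List.forall_mem_map.2 fun c _ => .const c, hC⟩) hk
    simpa only [List.length_map, List.map_append, List.map_map, Function.comp_def, List.map_id']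
      using (D.dfn_const (C.length ≤ N)).imp happ
  · rcases le_or_gt m N with hm | hm
    · filter_upwards [hC' m hm] with C hC using hC.mono fun B hB _ => hB
    · filter_upwards [eventually_tensorList_replicate_length p m] with C hlen
      exact .of_forall fun B hle => absurd hle (by simpa only [hlen, not_le] using hm)

theorem HasCombTrees.exists_ultrafilter (hp : D.HasCombTrees p R n) (W : Ultrafilter (ι → V)) :
    ∃ U : Ultrafilter (ι ⊕ List Bool → V), U.map (fun w i => w (.inl i)) = W ∧
      ∀ Ψ, D.IsGeneric p W Ψ → ∀ᶠ w in (U : Filter (ι ⊕ List Bool → V)),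
        IsFullCombTree R (fun C => Ψ C fun i => w (.inl i)) n fun η => w (.inr η) := by
  let good (A : Set (ι → V)) (Ψ : List V → (ι → V) → Prop) : Set (ι ⊕ List Bool → V) :=
    {w | (fun i => w (.inl i)) ∈ A ∧
      IsFullCombTree R (fun C => Ψ C fun i => w (.inl i)) n fun η => w (.inr η)}
  have : Nonempty ({A // A ∈ W} × {Ψ // D.IsGeneric p W Ψ}) :=
    ⟨⟨⟨_, Filter.univ_mem⟩, ⟨_, .true D p W⟩⟩⟩
  obtain ⟨U, hU⟩ := exists_ultrafilter_of_directed
    (s := fun i : {A // A ∈ W} × {Ψ // D.IsGeneric p W Ψ} => good i.1 i.2)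
    (fun i j => ⟨⟨⟨_, Filter.inter_mem i.1.2 j.1.2⟩, ⟨_, i.2.2.and j.2.2⟩⟩,
      fun w hw => ⟨hw.1.1, hw.2.mono fun C hC => hC.1⟩,
      fun w hw => ⟨hw.1.2, hw.2.mono fun C hC => hC.2⟩⟩)
    (fun i => by
      obtain ⟨B, hB, T, hT⟩ := ((Filter.eventually_mem_set.2 i.1.2).and (hp i.2.2)).exists
      exact ⟨Sum.elim B T, hB, hT⟩)
  refine ⟨U, Ultrafilter.eq_of_le fun A hA => ?_, fun Ψ hΨ => ?_⟩
  · change (fun (w : ι ⊕ List Bool → V) i => w (.inl i)) ⁻¹' A ∈ U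
    exact Filter.mem_of_superset (hU ⟨⟨A, hA⟩, ⟨_, .true D p W⟩⟩) fun w hw => hw.1
  · exact Filter.mem_of_superset (hU ⟨⟨_, Filter.univ_mem⟩, ⟨Ψ, hΨ⟩⟩) fun w hw => hw.2

theorem IsGeneric.forall_combs_append (hΨ : D.IsGeneric p W Ψ)
    {U : Ultrafilter (ι ⊕ List Bool → V)}
    (hU : ∀ Ψ, D.IsGeneric p W Ψ → ∀ᶠ w in (U : Filter (ι ⊕ List Bool → V)),
      IsFullCombTree R (fun C => Ψ C fun i => w (.inl i)) n fun η => w (.inr η)) :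
    D.IsGeneric p U fun C w =>
      ∀ C₀ ∈ combs n, Ψ (C ++ C₀.map fun η => w (.inr η)) fun i => w (.inl i) where
  dfnList l k hl hk := .forall_mem_finite (finite_combs n) fun C₀ _ => by
    have happ := hΨ.dfnList (l ++ C₀.map fun η => k (.inr η)) (fun i => k (.inl i))
      (List.forall_mem_append.2 ⟨hl, List.forall_mem_map.2 fun η _ => hk _⟩) fun i => hk _
    simpa only [List.map_append, List.map_map, Function.comp_def] using happ
  eventually l := by
    obtain ⟨N, hN⟩ := ((finite_combs n).image List.length).bddAbove
    filter_upwards [hΨ.eventually_append_left l N] with C hC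
    filter_upwards [hU _ hC] with w hw C₀ hC₀
    exact hw.comb C₀ hC₀ (by simpa using hN (Set.mem_image_of_mem _ hC₀))

theorem HasCombTrees.eventually_exists_isRootlessCombTree (hp : D.HasCombTrees p R n)
    (hΨ : D.IsGeneric p W Ψ) :
    ∀ᶠ B in (W : Filter (ι → V)), ∃ T, IsRootlessCombTree R (fun C => Ψ C B) n T := by
  obtain ⟨U, rfl, hU⟩ := hp.exists_ultrafilter W
  rw [Ultrafilter.coe_map, Filter.eventually_map]
  filter_upwards [hU Ψ hΨ, hp (hΨ.forall_combs_append hU)] with w h₀ ⟨T₁, h₁⟩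
  exact ⟨_, h₀.joinTrees (w (.inr [])) h₁⟩

theorem DfnList.dfn (hΨ : D.DfnList Ψ) (C : List V) : D.Dfn fun B => Ψ C B := by
  simpa only [List.map_map, Function.comp_def, List.map_id'] using
    hΨ (C.map fun c (_ : ι → V) => c) (fun i B => B i)
      (List.forall_mem_map.2 fun c _ => .const c) fun i => .coord i

theorem DfnList.isCombTree (hΨ : D.DfnList Ψ) (hR : D.DfnRel₂ R) {N : Set (List Bool)}
    (hN : N.Finite) {𝒞 : Set (List (List Bool))} (h𝒞 : 𝒞.Finite) :
    D.DfnRel fun (T : List Bool → V) B => IsCombTree R (fun C => Ψ C B) N 𝒞 T := by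
  have hnot : D.DfnRel fun (T : List Bool → V) (_ : ι → V) =>
      ∀ η ∈ N, ∀ ν ∈ N, StrictPrefix η ν → ¬R (T η) (T ν) :=
    .forall_mem_finite hN fun η _ => .forall_mem_finite hN fun ν _ =>
      (D.dfn_const _).imp (D.not (hR.comp (.coord (Sum.inl η)) (.coord (Sum.inl ν))))
  have hcomb : D.DfnRel fun (T : List Bool → V) B => ∀ C ∈ 𝒞, Ψ (C.map T) B :=
    .forall_mem_finite h𝒞 fun C _ => by
      simpa only [List.map_map, Function.comp_def] using
        hΨ (C.map fun η (e : List Bool ⊕ ι → V) => e (.inl η)) (fun i e => e (.inr i))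
          (List.forall_mem_map.2 fun η _ => .coord _) fun i => .coord _
  refine cast (congrArg D.Dfn (funext fun e => propext ?_)) (D.and hnot hcomb)
  exact ⟨fun h => ⟨h.1, h.2⟩, fun h => ⟨h.1, h.2⟩⟩

theorem IsGeneric.forall_mem {P : V → Prop} (hP : D.DfnSet P) (hp : ∀ᶠ x in (p : Filter V), P x) :
    D.IsGeneric p W fun C _ => ∀ x ∈ C, P x where
  dfnList l k hl _ := by
    simpa only [List.forall_mem_map, Set.mem_ofPred_eq] using
      Dfn.forall_mem_finite l.finite_toSet fun g hg => hP.comp (hl g hg)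
  eventually l := (eventually_tensorList_forall_mem hp l).mono fun _ hC => .of_forall fun _ => hC

theorem HasCombTrees.exists_common_isRootlessCombTree (hp : D.HasCombTrees p R n)
    (hΨ : D.IsGeneric p W Ψ) {K : Type} {S : Set K} (hS : S.Finite) :
    ∃ Y : (ι → V) → Prop, D.Dfn Y ∧ (∀ᶠ B in (W : Filter (ι → V)), Y B) ∧
      ∀ B : K → ι → V, (∀ k ∈ S, Y (B k)) →
        ∃ T, ∀ k ∈ S, IsRootlessCombTree R (fun C => Ψ C (B k)) n T := by
  by_contra! hcon
  have : Nonempty {Y : (ι → V) → Prop // D.Dfn Y ∧ ∀ᶠ B in (W : Filter (ι → V)), Y B} :=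
    ⟨⟨_, D.top, .of_forall fun _ => trivial⟩⟩
  obtain ⟨U, hU⟩ := exists_ultrafilter_of_directed
    (s := fun Y : {Y : (ι → V) → Prop // D.Dfn Y ∧ ∀ᶠ B in (W : Filter (ι → V)), Y B} =>
      {w : K × ι → V | (∀ k ∈ S, Y.1 fun i => w (k, i)) ∧
        ∀ T, ∃ k ∈ S, ¬IsRootlessCombTree R (fun C => Ψ C fun i => w (k, i)) n T})
    (fun Y Y' => ⟨⟨_, D.and Y.2.1 Y'.2.1, Y.2.2.and Y'.2.2⟩,
      fun w hw => ⟨fun k hk => (hw.1 k hk).1, hw.2⟩, fun w hw => ⟨fun k hk => (hw.1 k hk).2, hw.2⟩⟩)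
    (fun Y => let ⟨B, hB⟩ := hcon Y.1 Y.2.1 Y.2.2; ⟨fun i => B i.1 i.2, hB⟩)
  have hgen : D.IsGeneric p U fun C w => ∀ k ∈ S, Ψ C fun i => w (k, i) := by
    refine ⟨fun l k hl hk => .forall_mem_finite hS fun j _ => hΨ.dfnList l _ hl fun i => hk _,
      fun l => ?_⟩
    filter_upwards [hΨ.eventually l] with C hC
    exact Filter.mem_of_superset (hU ⟨Ψ C, DfnList.dfn hΨ.dfnList C, hC⟩) fun w hw => hw.1
  obtain ⟨w, ⟨T, hT⟩, -, hw⟩ := ((hp.eventually_exists_isRootlessCombTree hgen).and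
    (hU (Classical.arbitrary _))).exists
  obtain ⟨k, hk, hkT⟩ := hw T
  exact hkT (hT.mono fun C hC => hC k hk)

/-- The vertex `x` may be placed at the root of the rootless tree `s.1`, and satisfies `Ψ`
together with `s.2`. -/
def CanRoot (R : V → V → Prop) (Ψ : List V → (ι → V) → Prop) (n : ℕ) (x : V)
    (s : (List Bool → V) × (ι → V)) : Prop :=
  (∀ η : List Bool, η ≠ [] → η.length ≤ n → ¬R x (s.1 η)) ∧ Ψ [x] s.2

/-- A tree of pairs of a rootless tree and a tuple in `Y`: along branches the trees can be
rooted at a common vertex from `X`, while the tree of a right node is a comb tree for the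
tuples of all nodes above its left sibling. -/
abbrev IsRootingTree (R : V → V → Prop) (Ψ : List V → (ι → V) → Prop) (n : ℕ)
    (Y : (ι → V) → Prop) (X : List V) (m : ℕ) :
    (List Bool → (List Bool → V) × (ι → V)) → Prop :=
  IsSOP1Tree (fun x s => x ∈ X ∧ CanRoot R Ψ n x s)
    (fun s s' => IsRootlessCombTree R (fun C => Ψ C s.2) n s'.1) (fun s => Y s.2) m

theorem DfnList.canRoot (hΨ : D.DfnList Ψ) (hR : D.DfnRel₂ R) (n : ℕ) :
    D.DfnRel fun (x : Unit → V) (e : List Bool ⊕ ι → V) =>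
      CanRoot R Ψ n (x ()) (fun η => e (.inl η), fun i => e (.inr i)) := by
  refine D.and ?_ ?_
  · simpa only [Set.mem_ofPred_eq, and_imp] using Dfn.forall_mem_finite
      (S := {η : List Bool | η ≠ [] ∧ η.length ≤ n})
      (P := fun η (e : Unit ⊕ (List Bool ⊕ ι) → V) => ¬R (e (.inl ())) (e (.inr (.inl η))))
      ((List.finite_length_le Bool n).subset fun η hη => hη.2)
      fun η _ => D.not (hR.comp (.coord (Sum.inl ())) (.coord (Sum.inr (Sum.inl η))))
  · exact hΨ [fun e : Unit ⊕ (List Bool ⊕ ι) → V => e (.inl ())] (fun i e => e (.inr (.inr i)))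
      (List.forall_mem_singleton.2 (.coord _)) fun i => .coord _

theorem IsRootingTree.joinTrees {m : ℕ} {Y Y₂ : (ι → V) → Prop} {X₁ X₀ : List V}
    {c : (List Bool → V) × (ι → V)} (hY : Y c.2) (hc : ∀ x ∈ X₁ ++ X₀, CanRoot R Ψ n x c)
    {t₁ t₀ : List Bool → (List Bool → V) × (ι → V)} (h₁ : IsRootingTree R Ψ n Y X₁ m t₁)
    (h₀ : IsRootingTree R Ψ n (fun B => Y B ∧ Y₂ B) X₀ m t₀)
    (hroot : ∀ η ∈ {η : List Bool | η.length ≤ m},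
      IsRootlessCombTree R (fun C => Ψ C (t₀ η).2) n (t₁ []).1) :
    IsRootingTree R Ψ n Y (X₁ ++ X₀) (m + 1) (joinTrees c t₀ t₁) := by
  have enlarge {X Y' t} (hX : X ⊆ X₁ ++ X₀) (h : IsRootingTree R Ψ n Y' X m t) :
      IsSOP1Tree (fun x s => (x ∈ X₁ ++ X₀ ∧ CanRoot R Ψ n x c) ∧
          x ∈ X₁ ++ X₀ ∧ CanRoot R Ψ n x s)
        (fun s s' => IsRootlessCombTree R (fun C => Ψ C s.2) n s'.1) (fun s => Y' s.2) m t :=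
    h.map id id (fun x s _ hx => ⟨⟨hX hx.1, hc x (hX hx.1)⟩, hX hx.1, hx.2⟩)
      (fun _ _ _ hJ => hJ) fun _ hN => hN
  have h₀' := enlarge (List.subset_append_right X₁ X₀) h₀
  exact .glue hY ⟨h₀'.branch, fun η hη => ⟨(h₀.node η hη).1, hroot η hη⟩, h₀'.split⟩
    (enlarge (List.subset_append_left X₁ X₀) h₁)

theorem IsGeneric.eventually_exists_forall_mem (hD : D.NSOP1) {q : Ultrafilter V}
    (hpq : D.Agree p q) (hΨ : D.IsGeneric p W Ψ) {Y : (ι → V) → Prop} (hY : D.Dfn Y)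
    (hYW : ∀ᶠ B in (W : Filter (ι → V)), Y B) (j : ℕ) :
    ∀ᶠ X in (tensorList (List.replicate j q) : Filter (List V)),
      ∃ B, ∀ x ∈ X, Ψ [x] B ∧ Y B := by
  refine hD.eventually_exists_of_agree hpq (φ := fun B x => Ψ [x] B ∧ Y B) ?_ (fun j => ?_) j
  · exact D.and (hΨ.dfnList [fun e : ι ⊕ Unit → V => e (.inr ())] (fun i e => e (.inl i))
      (List.forall_mem_singleton.2 (.coord _)) fun i => .coord _)
      (hY.comp fun i => .coord (Sum.inl i))
  · filter_upwards [eventually_tensorList_forall_mem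
      (eventually_tensorList_singleton.1 (hΨ.eventually 1)) j] with X hX
    exact (eventually_forall_mem_list fun x hx => (hX x hx).and hYW).exists

theorem eventually_exists_isRootingTree (hD : D.NSOP1) {q : Ultrafilter V} (hpq : D.Agree p q)
    (hR : D.DfnRel₂ R) (hqp : ∀ᶠ x in (q : Filter V), ∀ᶠ y in (p : Filter V), ¬R x y)
    (hp : D.HasCombTrees p R n) (hΨ : D.IsGeneric p W Ψ) (m : ℕ) {Y : (ι → V) → Prop}
    (hY : D.Dfn Y) (hYW : ∀ᶠ B in (W : Filter (ι → V)), Y B) :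
    ∀ᶠ X in (tensorList (List.replicate (2 ^ m) q) : Filter (List V)),
      ∀ S : List Bool → V, (∀ x ∈ X, ∀ η : List Bool, η ≠ [] → η.length ≤ n → ¬R x (S η)) →
        ∃ t, (t []).1 = S ∧ IsRootingTree R Ψ n Y X m t := by
  induction m generalizing Y with
  | zero =>
    filter_upwards [hΨ.eventually_exists_forall_mem hD hpq hY hYW 1,
      eventually_tensorList_replicate_length q 1] with X ⟨B, hB⟩ hlen S hS
    obtain ⟨x, rfl⟩ := List.length_eq_one_iff.1 hlen
    have hx := List.mem_singleton_self x
    exact ⟨fun _ => (S, B), rfl, .of_depth_zero ⟨hx, hS x hx, (hB x hx).1⟩ (hB x hx).2⟩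
  | succ m ih =>
    have hroot := hΨ.eventually_exists_forall_mem hD hpq hY hYW (2 ^ (m + 1))
    rw [pow_succ, mul_two, List.replicate_add, eventually_tensorList_append] at hroot ⊢
    filter_upwards [hroot, ih hY hYW, eventually_tensorList_forall_mem hqp (2 ^ m),
      eventually_tensorList_replicate_length q (2 ^ m)] with X₁ hroot₁ ht₁ hX₁ hlen
    have hΨ' : D.IsGeneric p W fun C B => Ψ C B ∧ ∀ y ∈ C, ∀ x ∈ X₁, ¬R x y :=
      hΨ.and <| .forall_mem (.forall_mem_finite X₁.finite_toSet fun x _ =>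
        D.not (hR.comp (.const x) (.coord ()))) (eventually_forall_mem_list hX₁)
    obtain ⟨Y₂, hY₂, hYW₂, hcommon⟩ := hp.exists_common_isRootlessCombTree hΨ'
      (List.finite_length_le Bool m)
    filter_upwards [hroot₁, ih (D.and hY hY₂) (hYW.and hYW₂)] with X₀ ⟨B, hB⟩ ht₀ S hS
    obtain ⟨t₀, -, ht₀⟩ := ht₀ S (List.forall_mem_append.1 hS).2
    obtain ⟨T, hT⟩ := hcommon (fun η => (t₀ η).2) fun η hη => (ht₀.node η hη).2
    obtain ⟨t₁, rfl, ht₁⟩ := ht₁ T fun x hx η hη hηn =>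
      ((hT [] (Nat.zero_le m)).of_singleton hη hηn).2 _ (List.mem_singleton_self _) x hx
    obtain ⟨x, hx⟩ := List.exists_mem_of_length_pos (hlen ▸ Nat.two_pow_pos m)
    exact ⟨joinTrees (S, B) t₀ t₁, rfl, .joinTrees (hB x (List.mem_append_left X₀ hx)).2
      (fun x hx => ⟨hS x hx, (hB x hx).1⟩) ht₁ ht₀ fun η hη => (hT η hη).mono fun C hC => hC.1⟩

theorem HasCombTrees.succ (hD : D.NSOP1) {q : Ultrafilter V} (hpq : D.Agree p q)
    (hR : D.DfnRel₂ R) (hq : ∀ᶠ x in (q : Filter V), ∀ᶠ y in (q : Filter V), ¬R x y)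
    (hp : D.HasCombTrees p R n) : D.HasCombTrees p R (n + 1) := by
  intro ι W Ψ hΨ
  by_contra hcon
  let Y (B : ι → V) : Prop := ¬∃ T, IsFullCombTree R (fun C => Ψ C B) (n + 1) T
  have hY : D.Dfn Y := D.not <| D.ex <|
    DfnList.isCombTree hΨ.dfnList hR (List.finite_length_lt Bool (n + 1)) (finite_combs (n + 1))
  have hθ : D.DfnRel fun (x : Unit → V) (e : List Bool ⊕ ι → V) =>
      CanRoot R Ψ n (x ()) (fun η => e (.inl η), fun i => e (.inr i)) ∧ Y fun i => e (.inr i) :=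
    D.and (DfnList.canRoot hΨ.dfnList hR n) (hY.comp fun _ => .coord _)
  obtain ⟨d, hd⟩ := hD _ hθ
  have hqp : ∀ᶠ x in (q : Filter V), ∀ᶠ y in (p : Filter V), ¬R x y :=
    hq.mono fun x hx => (hpq (¬R x ·) (D.not (hR.comp (.const x) (.coord ())))).2 hx
  obtain ⟨X, hX, hXp⟩ := ((eventually_exists_isRootingTree hD hpq hR hqp hp hΨ d hY
    (Ultrafilter.eventually_not.2 hcon)).and (eventually_tensorList_forall_mem hqp (2 ^ d))).exists
  obtain ⟨v, hv⟩ := (eventually_forall_mem_list hXp).exists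
  obtain ⟨t, -, ht⟩ := hX (fun _ => v) fun x hx _ _ _ => hv x hx
  refine hd ⟨_, ht.map (fun s => Sum.elim s.1 s.2) (fun x _ => x) (fun x s hs hx => ⟨hx.2, hs⟩) ?_
    fun _ _ => trivial⟩
  rintro s s' hs hJ ⟨k, ⟨⟨-, hk⟩, -⟩, ⟨hk', -⟩, -⟩
  exact hs ⟨_, hJ.update_root hk' hk⟩

theorem hasCombTrees (hD : D.NSOP1) {q : Ultrafilter V} (hpq : D.Agree p q)
    (hR : D.DfnRel₂ R) (hq : ∀ᶠ x in (q : Filter V), ∀ᶠ y in (q : Filter V), ¬R x y) (n : ℕ) :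
    D.HasCombTrees p R n := by
  induction n with
  | zero =>
    intro ι W Ψ hΨ
    obtain ⟨v, -⟩ := hq.exists
    filter_upwards [eventually_tensorList_nil.1 (hΨ.eventually 0)] with B hB
    refine ⟨fun _ => v, fun η hη => absurd hη (Nat.not_lt_zero _), ?_⟩
    rintro _ rfl
    exact hB
  | succ n ih => exact ih.succ hD hpq hR hq

/-- In an NSOP₁ system, let `p` and `q` have the same type, and suppose that `Φ` holds of the
Morley sequences of `p` but fails on pairs in Morley sequences of `q`. Then there are trees
whose descending combs satisfy `Φ` while the pairs of comparable nodes do not. -/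
theorem exists_isFullCombTree (hD : D.NSOP1) {q : Ultrafilter V} (hpq : D.Agree p q)
    {Φ : List V → Prop} (hΦ : ∀ n, D.Dfn fun e : Fin n → V => Φ (List.ofFn e))
    (hp : ∀ l, ∀ᶠ C in (tensorList (List.replicate l p) : Filter (List V)), Φ C)
    (hq : ∀ᶠ x in (q : Filter V), ∀ᶠ y in (q : Filter V), ¬Φ [x, y]) (n : ℕ) :
    ∃ T, IsFullCombTree (fun x y => Φ [x, y]) Φ n T := by
  have hΦ' : D.DfnList fun l (_ : Unit → V) => Φ l := dfnList_of_forall_ofFn hΦ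
  have hR : D.DfnRel₂ fun x y => Φ [x, y] :=
    hΦ' [fun e : Bool → V => e false, fun e => e true] (fun _ e => e false) (by simp)
      fun _ => .coord _
  obtain ⟨v, -⟩ := hq.exists
  have hgen : D.IsGeneric p (pure fun _ : Unit => v) fun C _ => Φ C :=
    ⟨hΦ', fun l => (hp l).mono fun _ hC => .of_forall fun _ => hC⟩
  exact (hasCombTrees hD hpq hR hq n hgen).exists.choose_spec

end DefinableSystem

end Amalgamation

section Formulas

variable {L : FirstOrder.Language.{x, y}} {α β : Type*}

open Classical in
theorem exists_fin_formula (φ : L.Formula (α ⊕ β)) :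
    ∃ (n k : ℕ) (f : Fin n → α) (g : Fin k → β) (ψ : L.Formula (Fin n ⊕ Fin k)),
      f.Injective ∧ g.Injective ∧ ∀ (M : Type z) [L.Structure M] (a : α → M) (b : β → M),
        φ.Realize (Sum.elim a b) ↔ ψ.Realize (Sum.elim (a ∘ f) (b ∘ g)) := by
  let f := φ.freeVarFinset.toLeft.equivFin
  let g := φ.freeVarFinset.toRight.equivFin
  let index : φ.freeVarFinset →
      Fin φ.freeVarFinset.toLeft.card ⊕ Fin φ.freeVarFinset.toRight.card
    | ⟨.inl i, hi⟩ => .inl (f ⟨i, Finset.mem_toLeft.2 hi⟩)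
    | ⟨.inr j, hj⟩ => .inr (g ⟨j, Finset.mem_toRight.2 hj⟩)
  refine ⟨_, _, fun i => f.symm i, fun j => g.symm j, φ.restrictFreeVar index,
    Subtype.val_injective.comp f.symm.injective, Subtype.val_injective.comp g.symm.injective,
    fun M _ a b => (BoundedFormula.realize_restrictFreeVar _ ?_).symm⟩
  rintro ⟨i | j, h⟩ <;> simp [index]

theorem exists_formula_realize_iff_exists (φ : L.Formula (α ⊕ β)) (M : Type z) [L.Structure M]
    [Nonempty M] :
    ∃ ψ : L.Formula α, ∀ a : α → M, ψ.Realize a ↔ ∃ b : β → M, φ.Realize (Sum.elim a b) := by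
  obtain ⟨n, k, f, g, ψ, -, hg, hψ⟩ := exists_fin_formula.{x, y, z} φ
  refine ⟨(ψ.relabel (Sum.map f id)).iExs (Fin k), fun a => ?_⟩
  simp only [Formula.realize_iExs, Formula.realize_relabel, Sum.elim_comp_map, Function.comp_id,
    hψ]
  exact hg.surjective_comp_right.exists

end Formulas

section Ultrapowers

variable {L : FirstOrder.Language.{x, y}} {M : Type z} [L.Structure M] {ι : Type w}

/-- The ultrapower of `M` by `F`. -/
abbrev Ultrapower (F : Ultrafilter ι) (M : Type z) : Type (max w z) :=
  (F : Filter ι).Product fun _ => M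

/-- The element of the ultrapower represented by a function. -/
def toUltrapower (F : Ultrafilter ι) (f : ι → M) : Ultrapower F M := f

theorem toUltrapower_surjective (F : Ultrafilter ι) :
    Function.Surjective (toUltrapower F : (ι → M) → Ultrapower F M) :=
  Quotient.exists_rep

variable [Nonempty M]

theorem realize_toUltrapower (F : Ultrafilter ι) {β : Type*} (φ : L.Formula β) (v : β → ι → M) :
    (φ.Realize fun i => toUltrapower F (v i)) ↔
      ∀ᶠ s in (F : Filter ι), φ.Realize fun i => v i s :=
  Ultraproduct.realize_formula_cast φ v

theorem completeTheory_ultrapower (F : Ultrafilter ι) :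
    L.completeTheory (Ultrapower F M) = L.completeTheory M := by
  ext φ
  exact (Ultraproduct.sentence_realize φ).trans Filter.eventually_const

end Ultrapowers

section InternalNSOP1

variable {L : FirstOrder.Language.{x, y}} {N : Type z} [L.Structure N]
  {M : Type (max x y z)} [L.Structure M] [Nonempty M]

theorem ofFn_prefix_ofFn {X : Type*} (σ : ℕ → X) {i j : ℕ} (h : i ≤ j) :
    List.ofFn (fun k : Fin i => σ k) <+: List.ofFn fun k : Fin j => σ k := by
  rw [List.prefix_iff_eq_take]
  apply List.ext_getElem <;> simp [h]

theorem sop1PatternIn_ultrapower (F : Ultrafilter ℕ) (hF : (F : Filter ℕ) ≤ Filter.atTop)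
    {n k : ℕ} (φ : L.Formula (Fin n ⊕ Fin k)) {t : ℕ → List Bool → Fin k → M}
    (ht : ∀ d, IsSOP1Tree (fun a b => φ.Realize (Sum.elim a b))
      (Incompatible fun a b => φ.Realize (Sum.elim a b)) (fun _ => True) d (t d)) :
    SOP1PatternIn L (Ultrapower F M) := by
  have hge (i : ℕ) : ∀ᶠ d in (F : Filter ℕ), i ≤ d := hF (Filter.eventually_ge_atTop i)
  have realize_iff (a : Fin n → ℕ → M) (η : List Bool) :
      φ.Realize (Sum.elim (fun i => toUltrapower F (a i))
          fun j => toUltrapower F fun d => t d η j) ↔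
        ∀ᶠ d in (F : Filter ℕ), φ.Realize (Sum.elim (fun i => a i d) (t d η)) := by
    refine Iff.trans (iff_of_eq (congrArg φ.Realize ?_))
      ((realize_toUltrapower F φ (Sum.elim a fun j d => t d η j)).trans
        (Filter.eventually_congr (.of_forall fun d => iff_of_eq (congrArg φ.Realize ?_))))
    · exact funext (Sum.rec (fun _ => rfl) fun _ => rfl)
    · exact funext (Sum.rec (fun _ => rfl) fun _ => rfl)
  refine ⟨n, k, φ, fun η j => toUltrapower F fun d => t d η j, fun σ s => ?_, ?_⟩
  · choose a ha using fun d => (ht d).branch (List.ofFn fun i : Fin d => σ i) List.length_ofFn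
    refine ⟨fun i => toUltrapower F fun d => a d i, fun i _ => (realize_iff _ _).2 ?_⟩
    exact (hge i).mono fun d hd => ha d _ (ofFn_prefix_ofFn σ hd)
  · rintro η₁ η₂ h ⟨a, ha₂, ha₁⟩
    obtain ⟨a, rfl⟩ := (toUltrapower_surjective F).comp_left a
    obtain ⟨d, ⟨hd₂, hd₁⟩, hd⟩ :=
      ((((realize_iff a _).1 ha₂).and ((realize_iff a _).1 ha₁)).and (hge η₂.length)).exists
    exact (ht d).split η₁ η₂ h hd ⟨_, hd₂, hd₁⟩

theorem IsNSOP1Th.exists_not_isSOP1Tree (hN : IsNSOP1Th L N)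
    (hM : L.completeTheory N = L.completeTheory M) {α β : Type*} (φ : L.Formula (α ⊕ β)) :
    ∃ d, ¬∃ t : List Bool → β → M, IsSOP1Tree (fun a b => φ.Realize (Sum.elim a b))
      (Incompatible fun a b => φ.Realize (Sum.elim a b)) (fun _ => True) d t := by
  by_contra! ht
  choose t ht using ht
  obtain ⟨n, k, f, g, ψ, hf, -, hψ⟩ := exists_fin_formula φ
  refine hN ⟨Ultrapower (Filter.hyperfilter ℕ) M, inferInstance,
    hM.trans (completeTheory_ultrapower _).symm,
    sop1PatternIn_ultrapower _ Nat.hyperfilter_le_atTop ψ fun d =>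
      (ht d).map (· ∘ g) (· ∘ f) (fun a b _ h => (hψ M a b).1 h) ?_ fun _ _ => trivial⟩
  rintro b b' - h ⟨a, ha, ha'⟩
  obtain ⟨a, rfl⟩ := hf.surjective_comp_right a
  exact h ⟨a, (hψ M a b).2 ha, (hψ M a b').2 ha'⟩

end InternalNSOP1

section StructureSystem

variable (L : FirstOrder.Language.{x, y}) (M : Type z) [L.Structure M] [Nonempty M] (m : ℕ)

/-- The predicates of `m`-tuples definable with parameters in the structure `M`. -/
def structureSystem : DefinableSystem (Fin m → M) where
  Dfn {I} P := ∃ φ : L.Formula ((I × Fin m) ⊕ M),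
    ∀ e, P e ↔ φ.Realize (Sum.elim (fun q => e q.1 q.2) id)
  top := ⟨⊤, fun e => by simp⟩
  and := by
    rintro I P Q ⟨φ, hφ⟩ ⟨ψ, hψ⟩
    exact ⟨φ ⊓ ψ, fun e => (and_congr (hφ e) (hψ e)).trans Formula.realize_inf.symm⟩
  not := by
    rintro I P ⟨φ, hφ⟩
    exact ⟨∼φ, fun e => (not_congr (hφ e)).trans Formula.realize_not.symm⟩
  ex := by
    rintro U I P ⟨φ, hφ⟩
    let reindex : ((U ⊕ I) × Fin m) ⊕ M → ((I × Fin m) ⊕ M) ⊕ (U × Fin m)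
      | .inl (.inl u, s) => .inr (u, s)
      | .inl (.inr i, s) => .inl (.inl (i, s))
      | .inr c => .inl (.inr c)
    obtain ⟨ψ, hψ⟩ := exists_formula_realize_iff_exists (φ.relabel reindex) M
    refine ⟨ψ, fun e => ?_⟩
    refine ((Equiv.curry U (Fin m) M).symm.exists_congr fun k => ?_).trans (hψ _).symm
    rw [Formula.realize_relabel]
    refine (hφ (Sum.elim k e)).trans (iff_of_eq (congrArg φ.Realize ?_))
    funext q
    rcases q with ⟨_ | _, _⟩ | _ <;> rfl
  subst := by
    rintro I J P f ⟨φ, hφ⟩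
    refine ⟨φ.relabel (Sum.elim (fun q => (f q.1).map (·, q.2) (· q.2)) Sum.inr), fun e => ?_⟩
    rw [Formula.realize_relabel]
    refine (hφ _).trans (iff_of_eq (congrArg φ.Realize ?_))
    funext q
    rcases q with ⟨j, s⟩ | c
    · cases h : f j <;> simp [h]
    · rfl

variable {L}

theorem IsNSOP1Th.nsop1_structureSystem {N : Type z} [L.Structure N] (hN : IsNSOP1Th L N)
    {M : Type (max x y z)} [L.Structure M] [Nonempty M]
    (hM : L.completeTheory N = L.completeTheory M) (m : ℕ) : (structureSystem L M m).NSOP1 := by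
  rintro U E θ ⟨φ, hφ⟩
  let reindex : ((U ⊕ E) × Fin m) ⊕ M → (U × Fin m) ⊕ ((E × Fin m) ⊕ M)
    | .inl (.inl u, s) => .inl (u, s)
    | .inl (.inr i, s) => .inr (.inl (i, s))
    | .inr c => .inr (.inr c)
  have hθ (k : U → Fin m → M) (x : E → Fin m → M) : θ k x ↔ (φ.relabel reindex).Realize
      (Sum.elim (fun q => k q.1 q.2) (Sum.elim (fun q => x q.1 q.2) id)) := by
    rw [Formula.realize_relabel]
    refine (hφ (Sum.elim k x)).trans (iff_of_eq (congrArg φ.Realize ?_))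
    funext q
    rcases q with ⟨_ | _, _⟩ | _ <;> rfl
  obtain ⟨d, hd⟩ := hN.exists_not_isSOP1Tree hM (φ.relabel reindex)
  refine ⟨d, fun ⟨t, ht⟩ => hd ⟨_, ht.map (fun x => Sum.elim (fun q => x q.1 q.2) id)
    (fun k q => k q.1 q.2) (fun k x _ h => (hθ k x).1 h) ?_ fun _ _ => trivial⟩⟩
  rintro x x' - h ⟨k, hk, hk'⟩
  exact h ⟨fun u s => k (u, s), (hθ _ _).2 hk, (hθ _ _).2 hk'⟩

end StructureSystem

section FormulaCliques

variable {L : FirstOrder.Language.{x, y}} {m : ℕ} (cl : ∀ l : ℕ, L.Formula (Fin l × Fin m))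

/-- The relation defined on lists of `m`-tuples by a sequence of formulas, the `l`-th formula
being used for lists of length `l`. -/
def IsFormulaClique {S : Type*} [L.Structure S] (l : List (Fin m → S)) : Prop :=
  ∃ (k : ℕ) (w : Fin k → Fin m → S), l = List.ofFn w ∧ (cl k).Realize fun q => w q.1 q.2

theorem isFormulaClique_ofFn {S : Type*} [L.Structure S] {k : ℕ} (w : Fin k → Fin m → S) :
    IsFormulaClique cl (List.ofFn w) ↔ (cl k).Realize fun q => w q.1 q.2 := by
  refine ⟨?_, fun h => ⟨k, w, rfl, h⟩⟩
  rintro ⟨k', w', h, hr⟩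
  cases List.ofFn_inj'.1 h
  exact hr

theorem isFormulaClique_map {S β : Type*} [L.Structure S] (l : List β) (g : β → Fin m → S) :
    IsFormulaClique cl (l.map g) ↔ (cl l.length).Realize fun q => g l[q.1] q.2 := by
  refine Iff.trans (iff_of_eq (congrArg _ ?_)) (isFormulaClique_ofFn cl fun i => g (l.get i))
  exact List.ext_getElem (by simp) (by simp)

theorem isFormulaClique_map_toUltrapower {S : Type z} [L.Structure S] [Nonempty S] {ι : Type w}
    (F : Ultrafilter ι) {β : Type*} (l : List β) (g : β → Fin m → ι → S) :
    IsFormulaClique cl (l.map fun b i => toUltrapower F (g b i)) ↔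
      ∀ᶠ s in (F : Filter ι), IsFormulaClique cl (l.map fun b i => g b i s) := by
  simp only [isFormulaClique_map]
  exact realize_toUltrapower F _ _

theorem isFormulaClique_map_coe {S : Type z} [L.Structure S] (M : L.ElementarySubstructure S)
    (l : List (Fin m → M)) :
    IsFormulaClique cl (l.map fun b i => (b i : S)) ↔ IsFormulaClique cl l := by
  rw [← List.map_id l, List.map_map, isFormulaClique_map, isFormulaClique_map]
  exact M.subtype.map_formula _ _

theorem exists_isFullCombTree_of_ultrapower {S : Type z} [L.Structure S] [Nonempty S]
    {ι : Type w} (F : Ultrafilter ι) {n : ℕ} {T : List Bool → Fin m → Ultrapower F S}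
    (hT : IsFullCombTree (fun a b => IsFormulaClique cl [a, b]) (IsFormulaClique cl) n T) :
    ∃ T : List Bool → Fin m → S,
      IsFullCombTree (fun a b => IsFormulaClique cl [a, b]) (IsFormulaClique cl) n T := by
  choose X hX using fun η i => toUltrapower_surjective F (T η i)
  obtain rfl : (fun η i => toUltrapower F (X η i)) = T := funext₂ hX
  have hnot : ∀ᶠ s in (F : Filter ι), ∀ η ∈ {η : List Bool | η.length < n},
      ∀ ν ∈ {ν : List Bool | ν.length < n}, StrictPrefix η ν →
        ¬IsFormulaClique cl [fun i => X η i s, fun i => X ν i s] := by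
    refine (Filter.eventually_all_finite (List.finite_length_lt Bool n)).2 fun η hη =>
      (Filter.eventually_all_finite (List.finite_length_lt Bool n)).2 fun ν hν =>
        Filter.eventually_imp_distrib_left.2 fun hην => ?_
    exact Ultrafilter.eventually_not.2 fun h => hT.not_rel η hη ν hν hην
      ((isFormulaClique_map_toUltrapower cl F [η, ν] X).2 h)
  have hcomb : ∀ᶠ s in (F : Filter ι), ∀ C ∈ combs n,
      IsFormulaClique cl (C.map fun η i => X η i s) :=
    (Filter.eventually_all_finite (finite_combs n)).2 fun C hC =>
      (isFormulaClique_map_toUltrapower cl F C X).1 (hT.comb C hC)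
  obtain ⟨s, hs, hs'⟩ := (hnot.and hcomb).exists
  exact ⟨fun η i => X η i s, hs, hs'⟩

end FormulaCliques

section SkolemHull

variable {L : FirstOrder.Language.{x, y}} {V : Type z} [L.Structure V] [Nonempty V]

variable (L) in
/-- The Skolem hull of a set, an elementary substructure. -/
noncomputable def skolemHull (A : Set V) : L.ElementarySubstructure V :=
  (Substructure.closure (L.sum L.skolem₁) A).elementarySkolem₁Reduct

theorem subset_skolemHull (A : Set V) : A ⊆ skolemHull L A :=
  Substructure.subset_closure

theorem exists_term_of_mem_skolemHull {I : Type*} (C : I → V) (a : skolemHull L (Set.range C)) :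
    ∃ t : (L.sum L.skolem₁).Term I, t.realize C = a := by
  obtain ⟨t, ht⟩ := Substructure.mem_closure_iff_exists_term.1 a.2
  choose g hg using fun s : Set.range C => s.2
  refine ⟨t.relabel g, ?_⟩
  rw [Term.realize_relabel, ← ht]
  exact congrArg t.realize (funext hg)

theorem exists_formula_realize_skolemHull {I α : Type*} (C : I → V)
    (φ : L.Formula (α ⊕ skolemHull L (Set.range C))) :
    ∃ ψ : (L.sum L.skolem₁).Formula (α ⊕ I), ∀ d : α → skolemHull L (Set.range C),
      φ.Realize (Sum.elim d id) ↔ ψ.Realize (Sum.elim (fun s => (d s : V)) C) := by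
  choose t ht using exists_term_of_mem_skolemHull (L := L) C
  let f : α ⊕ skolemHull L (Set.range C) → (L.sum L.skolem₁).Term (α ⊕ I) :=
    Sum.elim (fun s => Term.var (.inl s)) fun a => (t a).relabel .inr
  refine ⟨BoundedFormula.subst (LHom.sumInl.onFormula φ) f, fun d => ?_⟩
  have realize_f : (fun r => (f r).realize (Sum.elim (fun s => (d s : V)) C)) =
      (skolemHull L (Set.range C)).subtype ∘ Sum.elim d id := by
    funext r
    rcases r with s | a
    · rfl
    · exact (Term.realize_relabel).trans (ht a)
  refine Iff.trans ?_ BoundedFormula.realize_subst.symm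
  rw [realize_f, ← ElementaryEmbedding.map_formula (skolemHull L (Set.range C)).subtype]
  exact (LHom.realize_onFormula _ φ).symm

/-- A sequence of pairs of `m`-tuples in which both entries of each pair have the same type
over the earlier pairs. The Boolean index selects the entry. -/
def AgreesOverPast (L : FirstOrder.Language.{x, y}) {V : Type*} [L.Structure V] {m : ℕ}
    (C : ℕ → Bool → Fin m → V) : Prop :=
  ∀ (i : ℕ) (φ : L.Formula (Fin m ⊕ (Fin i × Bool × Fin m))),
    φ.Realize (Sum.elim (C i true) fun q => C q.1 q.2.1 q.2.2) ↔
      φ.Realize (Sum.elim (C i false) fun q => C q.1 q.2.1 q.2.2)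

theorem AgreesOverPast.eventually {L : FirstOrder.Language.{x, y}} {V : Type z} [L.Structure V]
    {m : ℕ} {C : ℕ → Bool → Fin m → V} (hC : AgreesOverPast L C)
    (φ : L.Formula (Fin m ⊕ (ℕ × Bool × Fin m))) :
    ∀ᶠ i in Filter.atTop, (φ.Realize (Sum.elim (C i true) fun q => C q.1 q.2.1 q.2.2) ↔
      φ.Realize (Sum.elim (C i false) fun q => C q.1 q.2.1 q.2.2)) := by
  obtain ⟨n, k, f, g, ψ, -, -, hψ⟩ := exists_fin_formula.{x, y, z} φ
  have hlt : ∀ᶠ i in Filter.atTop, ∀ j, (g j).1 < i :=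
    Filter.eventually_all.2 fun j => Filter.eventually_gt_atTop _
  filter_upwards [hlt] with i hi
  have h := hC i (ψ.relabel (Sum.map f fun j => (⟨(g j).1, hi j⟩, (g j).2)))
  simp only [Formula.realize_relabel, Sum.elim_comp_map] at h
  exact (hψ V _ _).trans (h.trans (hψ V (C i false) fun q => C q.1 q.2.1 q.2.2).symm)

end SkolemHull

section HullTrees

variable {L : FirstOrder.Language.{x, y}} {m : ℕ} (cl : ∀ l : ℕ, L.Formula (Fin l × Fin m))

theorem dfn_isFormulaClique (M : Type z) [L.Structure M] [Nonempty M] (n : ℕ) :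
    (structureSystem L M m).Dfn fun e : Fin n → Fin m → M =>
      IsFormulaClique cl (List.ofFn e) :=
  ⟨(cl n).relabel .inl, fun e =>
    (isFormulaClique_ofFn cl e).trans (by rw [Formula.realize_relabel]; rfl)⟩

variable (L) in
/-- The Skolem hull of the entries of a sequence of pairs of tuples. -/
noncomputable abbrev pairHull {V : Type z} [L.Structure V] [Nonempty V]
    (C : ℕ → Bool → Fin m → V) : L.ElementarySubstructure V :=
  skolemHull L (Set.range fun q : ℕ × Bool × Fin m => C q.1 q.2.1 q.2.2)

variable {V : Type (max x y z)} [L.Structure V] [Nonempty V] {C : ℕ → Bool → Fin m → V}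

variable (L C) in
/-- The tuple `C i ε` as a tuple of the Skolem hull. -/
def pairHullEntry (i : ℕ) (ε : Bool) (s : Fin m) : pairHull L C :=
  ⟨C i ε s, subset_skolemHull _ ⟨(i, ε, s), rfl⟩⟩

theorem AgreesOverPast.agree_structureSystem (hC : AgreesOverPast (L.sum L.skolem₁) C)
    {F : Ultrafilter ℕ} (hF : (F : Filter ℕ) ≤ Filter.atTop) :
    (structureSystem L (pairHull L C) m).Agree
      (F.map fun i => pairHullEntry L C i false) (F.map fun i => pairHullEntry L C i true) := by
  rintro P ⟨φ, hφ⟩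
  obtain ⟨ψ, hψ⟩ := exists_formula_realize_skolemHull _ φ
  have key (d : Fin m → pairHull L C) : P d ↔ (ψ.relabel (Sum.map Prod.snd id)).Realize
      (Sum.elim (fun s => (d s : V)) fun q => C q.1 q.2.1 q.2.2) := by
    rw [Formula.realize_relabel, Sum.elim_comp_map]
    exact (hφ fun _ => d).trans (hψ _)
  have heq : ∀ᶠ i in (F : Filter ℕ), _ := hF (hC.eventually (ψ.relabel (Sum.map Prod.snd id)))
  exact Filter.eventually_congr <| heq.mono fun i hi =>
    (key (pairHullEntry L C i false)).trans (hi.symm.trans (key (pairHullEntry L C i true)).symm)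

theorem IsNSOP1Th.exists_isFullCombTree_of_agreesOverPast {N : Type z} [L.Structure N]
    (hN : IsNSOP1Th L N) (hV : L.completeTheory N = L.completeTheory V)
    (hC : AgreesOverPast (L.sum L.skolem₁) C)
    (htrue : ∀ i j, i < j → ¬IsFormulaClique cl [C i true, C j true])
    (hfalse : ∀ is : List ℕ, IsFormulaClique cl (is.map fun i => C i false)) (n : ℕ) :
    ∃ T : List Bool → Fin m → V,
      IsFullCombTree (fun a b => IsFormulaClique cl [a, b]) (IsFormulaClique cl) n T := by
  have hM : L.completeTheory (pairHull L C) = L.completeTheory V :=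
    (pairHull L C).elementarilyEquivalent
  have : Nonempty (pairHull L C) := (ElementarilyEquivalent.nonempty_iff hM).2 inferInstance
  have hcl := isFormulaClique_map_coe cl (pairHull L C)
  let F : Ultrafilter ℕ := Filter.hyperfilter ℕ
  have hp (l : ℕ) : ∀ᶠ D in (tensorList (List.replicate l
      (F.map fun i => pairHullEntry L C i false)) : Filter (List (Fin m → pairHull L C))),
        IsFormulaClique cl D := by
    rw [← List.map_replicate, eventually_tensorList_map]
    refine .of_forall fun is => ?_
    rw [← hcl, List.map_map]
    exact hfalse is
  have hq : ∀ᶠ a in (F.map fun i => pairHullEntry L C i true : Filter (Fin m → pairHull L C)),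
      ∀ᶠ b in (F.map fun i => pairHullEntry L C i true : Filter (Fin m → pairHull L C)),
        ¬IsFormulaClique cl [a, b] := by
    have hgt (i : ℕ) : ∀ᶠ j in (F : Filter ℕ), i < j :=
      Nat.hyperfilter_le_atTop (Filter.eventually_gt_atTop i)
    have hpair (i : ℕ) : ∀ᶠ j in (F : Filter ℕ),
        ¬IsFormulaClique cl [pairHullEntry L C i true, pairHullEntry L C j true] :=
      (hgt i).mono fun j hij h => htrue i j hij ((hcl [_, _]).2 h)
    exact Filter.eventually_map.2 (.of_forall fun i => Filter.eventually_map.2 (hpair i))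
  obtain ⟨T, hT⟩ := DefinableSystem.exists_isFullCombTree
    (hN.nsop1_structureSystem (hV.trans hM.symm) m)
    (hC.agree_structureSystem Nat.hyperfilter_le_atTop) (dfn_isFormulaClique cl _) hp hq n
  refine ⟨fun η s => T η s, fun η hη ν hν hην h =>
    hT.not_rel η hη ν hν hην ((hcl [T η, T ν]).1 h), fun D hD => ?_⟩
  have := (hcl _).2 (hT.comb D hD)
  rwa [List.map_map] at this

end HullTrees

section PairChoice

theorem exists_seq_of_forall_exists {α : Type*} {P : ∀ i : ℕ, (Fin i → α) → α → Prop}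
    (h : ∀ i t, ∃ a, P i t a) : ∃ s : ℕ → α, ∀ i, P i (fun j => s j) (s i) := by
  choose f hf using h
  let s : ℕ → α := Nat.lt_wfRel.wf.fix fun i ih => f i fun j => ih j j.2
  refine ⟨s, fun i => ?_⟩
  have hs : s i = f i fun j => s j := WellFounded.fix_eq _ _ _
  rw [hs]
  exact hf _ _

theorem exists_pairs_of_not_injective {K : Type*} [LinearOrder K] {Φ : ℕ → Type*}
    (hK : ∀ i (f : K → Φ i), ¬f.Injective) (tp : ∀ i, (Fin i → K × K) → K → Φ i) :
    ∃ s : ℕ → K × K, ∀ i, (s i).1 < (s i).2 ∧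
      tp i (fun j => s j) (s i).1 = tp i (fun j => s j) (s i).2 := by
  refine exists_seq_of_forall_exists (P := fun i t a => a.1 < a.2 ∧ tp i t a.1 = tp i t a.2)
    fun i t => ?_
  obtain ⟨a, a', htp, hne⟩ := Function.not_injective_iff.1 (hK i (tp i t))
  rcases hne.lt_or_gt with h | h
  · exact ⟨(a, a'), h, htp⟩
  · exact ⟨(a', a), h, htp.symm⟩

theorem exists_linearOrder_forall_not_injective (Φ : ℕ → Type u) :
    ∃ (K : Type u) (_ : LinearOrder K), ∀ i (f : K → Set (Φ i)), ¬f.Injective :=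
  ⟨Set (Set (Σ i, Φ i)), IsWellOrder.linearOrder WellOrderingRel, fun i f hf =>
    Function.cantor_injective (fun A => Sigma.mk i '' f A)
      ((Set.image_injective.2 sigma_mk_injective).comp hf)⟩

end PairChoice

section BinaryCode

variable {K : Type w} [LinearOrder K]

/-- The coding of sequences over a linear order by binary sequences, relative to a finite set:
an entry `a` contributes as many `false`s as there are elements of the finite set below `a`,
followed by `true`. -/
def binaryCode (G : Finset K) (s : List K) : List Bool :=
  s.flatMap fun a => List.replicate (G.filter (· < a)).card false ++ [true]

theorem binaryCode_append (G : Finset K) (s t : List K) :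
    binaryCode G (s ++ t) = binaryCode G s ++ binaryCode G t :=
  List.flatMap_append

theorem binaryCode_prefix_binaryCode {G : Finset K} {s t : List K} (h : s <+: t) :
    binaryCode G s <+: binaryCode G t := by
  obtain ⟨r, rfl⟩ := h
  exact ⟨_, (binaryCode_append G s r).symm⟩

theorem exists_binaryCode_branch {G : Finset K} {a a' : K} (ha : a ∈ G) (h : a < a')
    (s t : List K) : ∃ η, binaryCode G (s ++ [a]) = η ++ [true] ∧
      η ++ [false] <+: binaryCode G (s ++ a' :: t) := by
  have hss : G.filter (· < a) ⊂ G.filter (· < a') :=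
    Finset.ssubset_iff_of_subset (Finset.monotone_filter_right G fun _ _ hb => hb.trans h) |>.2
      ⟨a, by simp [ha, h], by simp⟩
  obtain ⟨r, hr⟩ := Nat.exists_eq_add_of_le (Finset.card_lt_card hss)
  refine ⟨binaryCode G s ++ List.replicate (G.filter (· < a)).card false,
    by simp [binaryCode], List.replicate r false ++ [true] ++ binaryCode G t, ?_⟩
  simp [binaryCode, hr, List.replicate_add]

variable {N : Type z} {m : ℕ} (F : Ultrafilter (Finset K)) (b : List Bool → Fin m → N)

/-- A binary tree of tuples, turned into a tree over a linear order `K` in an ultrapower indexed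
by the finite subsets of `K`. -/
def ultrapowerTree (s : List K) (i : Fin m) : Ultrapower F N :=
  toUltrapower F fun G => b (binaryCode G s) i

variable {F b} {L : FirstOrder.Language.{x, y}} [L.Structure N] [Nonempty N]
  {cl : ∀ l : ℕ, L.Formula (Fin l × Fin m)}

theorem isFormulaClique_map_ultrapowerTree
    (hb : ∀ (σ : List Bool) (l : List (List Bool)), (∀ η ∈ l, η <+: σ) →
      IsFormulaClique cl (l.map b)) {σ : List K} {l : List (List K)} (hl : ∀ s ∈ l, s <+: σ) :
    IsFormulaClique cl (l.map (ultrapowerTree F b)) := by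
  refine (isFormulaClique_map_toUltrapower cl F l fun s i G => b (binaryCode G s) i).2
    (.of_forall fun G => ?_)
  have := hb (binaryCode G σ) (l.map (binaryCode G))
    (List.forall_mem_map.2 fun s hs => binaryCode_prefix_binaryCode (hl s hs))
  rwa [List.map_map] at this

theorem not_isFormulaClique_ultrapowerTree (hF : (F : Filter (Finset K)) ≤ Filter.atTop)
    (hb : ∀ η ν, η ++ [false] <+: ν → ¬IsFormulaClique cl [b (η ++ [true]), b ν])
    {a a' : K} (h : a < a') (s t : List K) :
    ¬IsFormulaClique cl [ultrapowerTree F b (s ++ [a]), ultrapowerTree F b (s ++ a' :: t)] := by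
  intro hcl
  have hmem : ∀ᶠ G in (F : Filter (Finset K)), a ∈ G :=
    hF ((Filter.eventually_ge_atTop {a}).mono fun G hG => Finset.singleton_subset_iff.1 hG)
  have hev := (isFormulaClique_map_toUltrapower cl F [s ++ [a], s ++ a' :: t]
    fun s i G => b (binaryCode G s) i).1 hcl
  obtain ⟨G, hG, haG⟩ := (hev.and hmem).exists
  obtain ⟨η, hη, hη'⟩ := exists_binaryCode_branch haG h s t
  refine hb η _ hη' ?_
  rw [← hη]
  exact hG

end BinaryCode

section Pigeonhole

variable {L : FirstOrder.Language.{x, y}} {N : Type z} [L.Structure N] [Nonempty N] {m : ℕ}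

/-- The nodes along a path determined by pairs: the path follows the second entries, and
node `i` leaves it with the first entry of pair `i` if the Boolean is `true`. -/
def branchNode {K : Type*} (s : ℕ → K × K) (i : ℕ) (ε : Bool) : List K :=
  List.ofFn (fun j : Fin i => (s j).2) ++ [cond ε (s i).1 (s i).2]

theorem branchNode_false {K : Type*} (s : ℕ → K × K) (i : ℕ) :
    branchNode s i false = List.ofFn fun j : Fin (i + 1) => (s j).2 :=
  (List.ofFn_succ_last (f := fun j : Fin (i + 1) => (s j).2)).symm

theorem exists_branchNode_eq {K : Type*} (s : ℕ → K × K) {i j : ℕ} (h : i < j) :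
    ∃ t, branchNode s j true = List.ofFn (fun k : Fin i => (s k).2) ++ (s i).2 :: t := by
  obtain ⟨t, ht⟩ := ofFn_prefix_ofFn (fun k => (s k).2) h
  refine ⟨t ++ [(s j).1], ?_⟩
  rw [branchNode, ← ht, List.ofFn_succ_last]
  simp

theorem exists_agreesOverPast (cl : ∀ l : ℕ, L.Formula (Fin l × Fin m))
    (b : List Bool → Fin m → N)
    (hpath : ∀ (σ : List Bool) (l : List (List Bool)), (∀ η ∈ l, η <+: σ) →
      IsFormulaClique cl (l.map b))
    (hinc : ∀ η ν, η ++ [false] <+: ν → ¬IsFormulaClique cl [b (η ++ [true]), b ν]) :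
    ∃ (ι : Type (max x y)) (F : Ultrafilter ι) (C : ℕ → Bool → Fin m → Ultrapower F N),
      AgreesOverPast (L.sum L.skolem₁) C ∧
      (∀ i j, i < j → ¬IsFormulaClique cl [C i true, C j true]) ∧
      ∀ is : List ℕ, IsFormulaClique cl (is.map fun i => C i false) := by
  let Φ (i : ℕ) := (L.sum L.skolem₁).Formula (Fin m ⊕ (Fin i × Bool × Fin m))
  obtain ⟨K, _, hK⟩ := exists_linearOrder_forall_not_injective Φ
  let F : Ultrafilter (Finset K) := Ultrafilter.of Filter.atTop
  let c : List K → Fin m → Ultrapower F N := ultrapowerTree F b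
  obtain ⟨s, hs⟩ := exists_pairs_of_not_injective hK fun i t a =>
    {φ | φ.Realize (Sum.elim (c (List.ofFn (fun j => (t j).2) ++ [a])) fun q =>
      c (List.ofFn (fun k : Fin q.1 => (t (k.castLE q.1.2.le)).2) ++
        [cond q.2.1 (t q.1).1 (t q.1).2]) q.2.2)}
  refine ⟨Finset K, F, fun i ε => c (branchNode s i ε),
    fun i φ => Set.ext_iff.1 (hs i).2 φ, fun i j hij => ?_, fun is => ?_⟩
  · obtain ⟨t, ht⟩ := exists_branchNode_eq s hij
    beta_reduce
    rw [ht]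
    exact not_isFormulaClique_ultrapowerTree (Ultrafilter.of_le _) hinc (hs i).1 _ t
  · refine List.map_map (f := fun i => branchNode s i false) (g := c) ▸
      isFormulaClique_map_ultrapowerTree hpath (σ := branchNode s is.sum false)
        (List.forall_mem_map.2 fun i hi => ?_)
    rw [branchNode_false, branchNode_false]
    exact ofFn_prefix_ofFn (fun k => (s k).2) (Nat.succ_le_succ (List.single_le_sum (by simp) i hi))

theorem IsNSOP1Th.exists_isFullCombTree (hN : IsNSOP1Th L N)
    (cl : ∀ l : ℕ, L.Formula (Fin l × Fin m)) (b : List Bool → Fin m → N)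
    (hpath : ∀ (σ : List Bool) (l : List (List Bool)), (∀ η ∈ l, η <+: σ) →
      IsFormulaClique cl (l.map b))
    (hinc : ∀ η ν, η ++ [false] <+: ν → ¬IsFormulaClique cl [b (η ++ [true]), b ν]) (n : ℕ) :
    ∃ T : List Bool → Fin m → N,
      IsFullCombTree (fun a b => IsFormulaClique cl [a, b]) (IsFormulaClique cl) n T := by
  obtain ⟨ι, F, C, hC, htrue, hfalse⟩ := exists_agreesOverPast cl b hpath hinc
  obtain ⟨T, hT⟩ := hN.exists_isFullCombTree_of_agreesOverPast cl
    (completeTheory_ultrapower F).symm hC htrue hfalse n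
  exact exists_isFullCombTree_of_ultrapower cl F hT

end Pigeonhole

section DescendingCombs

theorem meet_prefix_left : ∀ η ν : List Bool, meet η ν <+: η
  | [], _ => by simp [meet]
  | _ :: _, [] => by simp [meet]
  | a :: η, b :: ν => by
    rw [meet]
    split_ifs
    · exact List.cons_prefix_cons.2 ⟨rfl, meet_prefix_left η ν⟩
    · exact List.nil_prefix

theorem meet_prefix_right : ∀ η ν : List Bool, meet η ν <+: ν
  | [], _ => by simp [meet]
  | _ :: _, [] => by simp [meet]
  | a :: η, b :: ν => by
    rw [meet]
    split_ifs with h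
    · exact List.cons_prefix_cons.2 ⟨h, meet_prefix_right η ν⟩
    · exact List.nil_prefix

theorem meetInit_prefix_apply (c : ℕ → List Bool) {k i : ℕ} (h : i ≤ k) : meetInit c k <+: c i := by
  induction k with
  | zero =>
    obtain rfl := Nat.le_zero.1 h
    exact List.prefix_rfl
  | succ k ih =>
    rcases Nat.le_succ_iff.1 h with h | rfl
    · exact (meet_prefix_left _ _).trans (ih h)
    · exact meet_prefix_right _ _

theorem meetInit_cons {c t : ℕ → List Bool} {a : Bool} {k : ℕ} (h : ∀ i ≤ k, c i = a :: t i) :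
    meetInit c k = a :: meetInit t k := by
  induction k with
  | zero => exact h 0 le_rfl
  | succ k ih =>
    simp [meetInit, meet, ih fun i hi => h i (hi.trans k.le_succ), h (k + 1) le_rfl]

namespace IsDescendingComb

variable {l : ℕ} {c : ℕ → List Bool}

theorem mono {l' : ℕ} (hc : IsDescendingComb l c) (h : l' ≤ l) : IsDescendingComb l' c :=
  ⟨fun i j hi hj => hc.1 i j (hi.trans_le h) (hj.trans_le h),
    fun i j hij hj => hc.2.1 i j hij (hj.trans_le h), fun k hk => hc.2.2 k (hk.trans_le h)⟩

theorem of_cons {t : ℕ → List Bool} {a : Bool} (h : ∀ i < l, c i = a :: t i)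
    (hc : IsDescendingComb l c) : IsDescendingComb l t := by
  obtain ⟨hanti, hlex, hmeet⟩ := hc
  have hm (k : ℕ) (hk : k < l) : meetInit c k = a :: meetInit t k :=
    meetInit_cons fun i hi => h i (hi.trans_lt hk)
  refine ⟨fun i j hi hj hij => ?_, fun i j hij hj => ?_, fun k hk => ?_⟩
  · simpa [h i hi, h j hj] using hanti i j hi hj hij
  · simpa [h i (hij.trans hj), h j hj, LexLt, StrictPrefix, meet] using hlex i j hij hj
  · simpa [hm (k + 1) hk, hm k (k.lt_succ_self.trans hk), StrictPrefix] using hmeet k hk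

theorem forall_init_eq_cons (hc : IsDescendingComb (l + 2) c) :
    ∃ a, ∀ i ≤ l, c i = a :: (c i).tail := by
  cases h : meetInit c l with
  | nil =>
    obtain ⟨hpre, hne⟩ := hc.2.2 l (Nat.lt_succ_self _)
    rw [h] at hpre hne
    exact (hne (List.prefix_nil.1 hpre)).elim
  | cons a μ =>
    refine ⟨a, fun i hi => ?_⟩
    obtain ⟨s, hs⟩ := meetInit_prefix_apply c hi
    rw [← hs, h]
    rfl

theorem trichotomy (hc : IsDescendingComb l c) :
    (l = 1 ∧ c 0 = []) ∨ (∃ a, ∀ i < l, c i = a :: (c i).tail) ∨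
      ∃ k, l = k + 1 ∧ (∀ i < k, c i = false :: (c i).tail) ∧ c k = true :: (c k).tail := by
  match l with
  | 0 => exact .inr (.inl ⟨true, fun i hi => (Nat.not_lt_zero i hi).elim⟩)
  | 1 =>
    cases h : c 0 with
    | nil => exact .inl ⟨rfl, rfl⟩
    | cons a t => exact .inr (.inl ⟨a, fun i hi => by rw [Nat.lt_one_iff.1 hi, h]; rfl⟩)
  | l + 2 =>
    obtain ⟨a, ha⟩ := hc.forall_init_eq_cons
    cases h : c (l + 1) with
    | nil =>
      exact (hc.1 (l + 1) 0 (by lia) (by lia) (by lia) (h ▸ List.nil_prefix)).elim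
    | cons a' t =>
      by_cases haa : a = a'
      · refine .inr (.inl ⟨a, fun i hi => ?_⟩)
        rcases Nat.lt_succ_iff_lt_or_eq.1 hi with hi | rfl
        · exact ha i (Nat.lt_succ_iff.1 hi)
        · rw [h, haa]; rfl
      · have hlex := hc.2.1 0 (l + 1) (by lia) (by lia)
        rw [ha 0 l.zero_le, h] at hlex
        obtain ⟨rfl, rfl⟩ : false = a ∧ true = a' := by
          simpa [LexLt, StrictPrefix, meet, haa] using hlex
        exact .inr (.inr ⟨l + 1, rfl, fun i hi => ha i (Nat.lt_succ_iff.1 hi), by rw [h]; rfl⟩)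

theorem mem_combs {n : ℕ} (hc : IsDescendingComb l c) (hn : ∀ i < l, (c i).length < n) :
    (List.range l).reverse.map c ∈ combs n := by
  induction n generalizing l c with
  | zero =>
    obtain rfl : l = 0 := Nat.eq_zero_of_not_pos fun h => Nat.not_lt_zero _ (hn 0 h)
    rfl
  | succ n ih =>
    have of_head {l : ℕ} {a : Bool} (hc : IsDescendingComb l c)
        (hn : ∀ i < l, (c i).length < n + 1) (h : ∀ i < l, c i = a :: (c i).tail) :
        ∃ C ∈ combs n, (List.range l).reverse.map c = C.map (a :: ·) := by
      refine ⟨_, ih (hc.of_cons h) fun i hi => ?_, ?_⟩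
      · have hlen := hn i hi
        rw [h i hi] at hlen
        exact Nat.lt_of_succ_lt_succ hlen
      · rw [List.map_map]
        exact List.map_congr_left fun i hi => h i (by simpa using hi)
    obtain ⟨rfl, h⟩ | ⟨a, h⟩ | ⟨k, rfl, h, hk⟩ := hc.trichotomy
    · exact .inl (by simp [h])
    · obtain ⟨C, hC, hCe⟩ := of_head hc hn h
      exact hCe ▸ map_cons_mem_combs_succ hC a
    · obtain ⟨C, hC, hCe⟩ := of_head (hc.mono k.le_succ)
        (fun i hi => hn i (hi.trans k.lt_succ_self)) h
      rw [List.range_succ, List.reverse_append, List.map_append, hCe, List.reverse_singleton,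
        List.map_singleton, hk]
      have hlen := hn k k.lt_succ_self
      rw [hk] at hlen
      exact cons_map_cons_mem_combs_succ (Nat.lt_of_succ_lt_succ hlen) hC

end IsDescendingComb

/-- The descending combs in the full binary tree, listed from right to left. -/
def descendingCombs : Set (List (List Bool)) :=
  {C | ∃ l c, IsDescendingComb l c ∧ C = (List.range l).reverse.map c}

theorem eventually_mem_combs {C : List (List Bool)} (hC : C ∈ descendingCombs) :
    ∀ᶠ n in Filter.atTop, C ∈ combs n := by
  obtain ⟨l, c, hc, rfl⟩ := hC
  have hlen : ∀ᶠ n in Filter.atTop, ∀ i ∈ Finset.range l, (c i).length < n :=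
    (Filter.eventually_all_finset _).2 fun i _ => Filter.eventually_gt_atTop _
  exact hlen.mono fun n hn => hc.mem_combs fun i hi => hn i (Finset.mem_range.2 hi)

end DescendingCombs

section JointConsistency

namespace ParamFormula

variable {L : FirstOrder.Language.{u, v}} {𝕄 : Type w} [L.Structure 𝕄] {γ : Type}

/-- Joint satisfiability of the instances `φ(x̄, d)` of a formula at the tuples `d` of a list. -/
def JointlyConsistent {ξ : Type w'} (φ : ParamFormula L 𝕄 (ξ ⊕ γ)) (l : List (γ → 𝕄)) : Prop :=
  ∃ xx : ξ → 𝕄, ∀ d ∈ l, (φ.subst d).Realize xx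

theorem jointlyConsistent_pair {ξ : Type w'} {φ : ParamFormula L 𝕄 (ξ ⊕ γ)} {c d : γ → 𝕄} :
    φ.JointlyConsistent [c, d] ↔ ∃ xx, (φ.subst c).Realize xx ∧ (φ.subst d).Realize xx := by
  simp [JointlyConsistent]

theorem realize_subst {ξ : Type w'} (φ : ParamFormula L 𝕄 (ξ ⊕ γ)) (c : γ → 𝕄) (xx : ξ → 𝕄) :
    (φ.subst c).Realize xx ↔ φ.toFormula.Realize (Sum.elim (Sum.elim xx c) φ.params) := by
  rw [Realize, subst, Formula.realize_relabel]
  refine iff_of_eq (congrArg φ.toFormula.Realize ?_)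
  funext a
  rcases a with (_ | _) | _ <;> rfl

variable {k : ℕ} {α : Type w'}

/-- The formula expressing that the instances of `φ` at a list of tuples of variables are
jointly satisfiable. -/
noncomputable def consistencyFormula (φ : ParamFormula L 𝕄 (Fin k ⊕ γ)) (C : List (γ → α)) :
    ParamFormula L 𝕄 α where
  Params := φ.Params
  toFormula := (Formula.iInf fun i : Fin C.length => φ.toFormula.relabel
    (Sum.elim (Sum.elim Sum.inr fun y => Sum.inl (Sum.inl (C[i] y))) fun p =>
      Sum.inl (Sum.inr p))).iExs (Fin k)
  params := φ.params

theorem realize_consistencyFormula (φ : ParamFormula L 𝕄 (Fin k ⊕ γ)) (C : List (γ → α))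
    (v : α → 𝕄) :
    (φ.consistencyFormula C).Realize v ↔ φ.JointlyConsistent (C.map (v ∘ ·)) := by
  rw [Realize, consistencyFormula, Formula.realize_iExs, JointlyConsistent]
  refine exists_congr fun xx => ?_
  rw [Formula.realize_iInf, List.forall_mem_map, List.forall_mem_iff_getElem, Fin.forall_iff]
  refine forall₂_congr fun i hi => ?_
  rw [realize_subst, Formula.realize_relabel]
  refine iff_of_eq (congrArg φ.toFormula.Realize ?_)
  funext a
  rcases a with (_ | _) | _ <;> rfl

end ParamFormula

end JointConsistency

section Saturation

variable {L : FirstOrder.Language.{u, v}} {𝕄 : Type w} [L.Structure 𝕄] {γ : Type} {k : ℕ}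

theorem exists_isCombTree_of_forall_isFullCombTree {κ : Cardinal.{w}} [IsMonster L 𝕄 κ]
    (hκ : Cardinal.aleph0 < κ) {A : Set 𝕄} (hA : Cardinal.mk A < κ) [Countable γ]
    {φ : ParamFormula L 𝕄 (Fin k ⊕ γ)} (hφ : φ.ParamsIn A) {𝒞 : Set (List (List Bool))}
    (h𝒞 : ∀ C ∈ 𝒞, ∀ᶠ n in Filter.atTop, C ∈ combs n) {T : ℕ → List Bool → γ → 𝕄}
    (hT : ∀ n, IsFullCombTree (fun a b => φ.JointlyConsistent [a, b]) φ.JointlyConsistent n (T n)) :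
    ∃ b, IsCombTree (fun a b => φ.JointlyConsistent [a, b]) φ.JointlyConsistent .univ 𝒞 b := by
  let consistent (C : List (List Bool)) : ParamFormula L 𝕄 (ULift.{w} (List Bool × γ)) :=
    φ.consistencyFormula (C.map fun η y => ⟨(η, y)⟩)
  have realize_consistent (C : List (List Bool)) (v : ULift.{w} (List Bool × γ) → 𝕄) :
      (consistent C).Realize v ↔ φ.JointlyConsistent (C.map fun η y => v ⟨(η, y)⟩) := by
    rw [ParamFormula.realize_consistencyFormula, List.map_map]
    rfl
  let S : Set (ParamFormula L 𝕄 (ULift.{w} (List Bool × γ))) :=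
    {θ | ∃ η ν, StrictPrefix η ν ∧ θ = (consistent [η, ν]).not} ∪ consistent '' 𝒞
  have eventually_realize : ∀ θ ∈ S, ∀ᶠ n in Filter.atTop,
      θ.Realize fun a => T n a.down.1 a.down.2 := by
    rintro θ (⟨η, ν, hην, rfl⟩ | ⟨C, hC, rfl⟩)
    · filter_upwards [Filter.eventually_gt_atTop ν.length] with n hn
      exact fun h => (hT n).not_rel η (hην.1.length_le.trans_lt hn) ν hn hην
        ((realize_consistent [η, ν] _).1 h)
    · filter_upwards [h𝒞 C hC] with n hn
      exact (realize_consistent C _).2 ((hT n).comb C hn)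
  obtain ⟨v, hv⟩ := IsMonster.saturated (L := L) (κ := κ) A S
    (Cardinal.mk_le_aleph0.trans_lt hκ) hA
    (by rintro θ (⟨η, ν, -, rfl⟩ | ⟨C, -, rfl⟩) <;> exact hφ)
    fun S₀ hS₀ => ⟨_, ((Filter.eventually_all_finset S₀).2 fun θ hθ =>
      eventually_realize θ (hS₀ θ hθ)).exists.choose_spec⟩
  refine ⟨fun η y => v ⟨(η, y)⟩, fun η _ ν _ hην h => ?_, fun C hC => ?_⟩
  · exact hv _ (.inl ⟨η, ν, hην, rfl⟩) ((realize_consistent [η, ν] v).2 h)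
  · exact (realize_consistent C v).1 (hv _ (.inr ⟨C, hC, rfl⟩))

theorem famKInconsistent_two_of_lt {ι X : Type*} [LinearOrder ι] {C : ι → X → Prop}
    (h : ∀ i j, i < j → ¬∃ xx, C i xx ∧ C j xx) : FamKInconsistent 2 C := by
  classical
  intro s hs
  obtain ⟨i, j, hij, rfl⟩ := Finset.card_eq_two.1 hs
  rintro ⟨xx, hxx⟩
  have hi := hxx i (by simp)
  have hj := hxx j (by simp)
  rcases hij.lt_or_gt with hij | hij
  exacts [h i j hij ⟨xx, hi, hj⟩, h j i hij ⟨xx, hj, hi⟩]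

theorem hasKDCTP2_two_of_isCombTree [Finite γ] {φ : ParamFormula L 𝕄 (Fin k ⊕ γ)}
    {b : List Bool → γ → 𝕄}
    (hb : IsCombTree (fun a b => φ.JointlyConsistent [a, b]) φ.JointlyConsistent .univ
      descendingCombs b) : HasKDCTP2 L 𝕄 2 := by
  obtain ⟨n, ⟨e⟩⟩ := Finite.exists_equiv_fin γ
  let ψ : ParamFormula L 𝕄 (Fin k ⊕ Fin n) :=
    ⟨φ.Params, φ.toFormula.relabel (Sum.map (Sum.map id e) id), φ.params⟩
  have realize_ψ (d : γ → 𝕄) (xx : Fin k → 𝕄) :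
      (ψ.subst (d ∘ e.symm)).Realize xx ↔ (φ.subst d).Realize xx := by
    rw [ParamFormula.realize_subst, ParamFormula.realize_subst, Formula.realize_relabel]
    refine iff_of_eq (congrArg φ.toFormula.Realize ?_)
    funext a
    rcases a with (_ | _) | _ <;> simp [ψ]
  refine ⟨k, n, ψ, fun η => b η ∘ e.symm, fun σ => famKInconsistent_two_of_lt fun i j hij h => ?_,
    fun l c hc => ?_⟩
  · simp only [realize_ψ] at h
    exact hb.not_rel _ trivial _ trivial
      ⟨ofFn_prefix_ofFn σ hij.le, fun h => hij.ne (by simpa using congrArg List.length h)⟩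
      (ParamFormula.jointlyConsistent_pair.2 h)
  · obtain ⟨xx, hxx⟩ := hb.comb _ ⟨l, c, hc, rfl⟩
    simp only [realize_ψ]
    exact ⟨xx, fun i hi => hxx _ (by simpa using ⟨i, hi, rfl⟩)⟩

end Saturation

section CoNSOP1

theorem infinite_of_infinite_pi {ι X : Type*} [Finite ι] [Infinite (ι → X)] : Infinite X :=
  not_finite_iff_infinite.1 fun _ => not_finite (ι → X)

theorem infinite_of_forall_not_rel {X : Type*} {R : X → X → Prop} {b : List Bool → X}
    (hrefl : ∀ η, R (b η) (b η))
    (hinc : ∀ η ν, η ++ [false] <+: ν → ¬R (b (η ++ [true])) (b ν)) : Infinite X := by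
  have hne (i j : ℕ) (hij : i < j) :
      b (List.replicate i false ++ [true]) ≠ b (List.replicate j false ++ [true]) := by
    intro h
    refine hinc (List.replicate i false) (List.replicate j false ++ [true]) ?_ ?_
    · rw [← List.replicate_succ']
      exact (List.prefix_replicate_iff.2 (by simpa using hij)).trans (List.prefix_append _ _)
    · rw [h]
      exact hrefl _
  exact .of_injective _ (Function.Injective.of_lt_imp_ne hne)

variable {L : FirstOrder.Language.{u, v}} {𝕄 : Type w} [L.Structure 𝕄] {k m nv : ℕ}

theorem ParamFormula.jointlyConsistent_of_forall_famConsistent {γ : Type}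
    {φ : ParamFormula L 𝕄 (Fin k ⊕ γ)} {b : List Bool → γ → 𝕄}
    (hb : ∀ σ : ℕ → Bool, FamConsistent fun (n : ℕ) (xx : Fin k → 𝕄) =>
      (φ.subst (b (List.ofFn fun i : Fin n => σ i))).Realize xx)
    (σ : List Bool) {l : List (List Bool)} (hl : ∀ η ∈ l, η <+: σ) :
    φ.JointlyConsistent (l.map b) := by
  obtain ⟨xx, hxx⟩ := hb (fun i => σ.getD i false) (Finset.range (σ.length + 1))
  refine ⟨xx, List.forall_mem_map.2 fun η hη => ?_⟩
  have hofFn : (List.ofFn fun i : Fin η.length => σ.getD i false) = η := by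
    obtain ⟨s, rfl⟩ := hl η hη
    refine List.ext_getElem (by simp) fun i _ hi => ?_
    simp [List.getElem?_append_left hi, List.getElem?_eq_getElem hi]
  have hrealize := hxx η.length (Finset.mem_range.2 (Nat.lt_succ_of_le (hl η hη).length_le))
  beta_reduce at hrealize
  rwa [hofFn] at hrealize

variable {A : Set 𝕄} {P : Set (ParamFormula L 𝕄 (Fin nv))}

/-- The `pLang`-formula expressing that the instances of `φ` at `l` tuples of realizations of
the type are jointly satisfiable. -/
noncomputable def pCliqueFormula (φ : ParamFormula L 𝕄 (Fin k ⊕ (Fin m × Fin nv)))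
    (hφ : φ.ParamsIn A) (l : ℕ) : (pLang L 𝕄 A nv).Formula (Fin l × Fin m) :=
  let R : (pLang L 𝕄 A nv).Relations (l * m) :=
    ⟨φ.consistencyFormula (List.ofFn fun i q => (finProdFinEquiv (i, q.1), q.2)), hφ⟩
  R.formula fun t => Term.var (finProdFinEquiv.symm t)

theorem isFormulaClique_pCliqueFormula {φ : ParamFormula L 𝕄 (Fin k ⊕ (Fin m × Fin nv))}
    (hφ : φ.ParamsIn A) (l : List (Fin m → PRealizations L 𝕄 P)) :
    IsFormulaClique (pCliqueFormula φ hφ) l ↔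
      φ.JointlyConsistent (l.map fun d q => (d q.1).1 q.2) := by
  rw [← List.ofFn_get l, isFormulaClique_ofFn, pCliqueFormula]
  refine Formula.realize_rel.trans ((φ.realize_consistencyFormula _ _).trans
    (iff_of_eq (congrArg _ ?_)))
  rw [List.map_ofFn, List.map_ofFn]
  refine congrArg List.ofFn (funext₂ fun i q => ?_)
  simp only [Function.comp_apply, Term.realize_var, Equiv.symm_apply_apply]

theorem exists_isFormulaClique_tree_of_not_coNSOP1 (h : ¬CoNSOP1 L 𝕄 A P) :
    ∃ (k m : ℕ) (φ : ParamFormula L 𝕄 (Fin k ⊕ (Fin m × Fin nv))) (hφ : φ.ParamsIn A)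
      (b : List Bool → Fin m → PRealizations L 𝕄 P),
      (∀ (σ : List Bool) (l : List (List Bool)), (∀ η ∈ l, η <+: σ) →
        IsFormulaClique (pCliqueFormula φ hφ) (l.map b)) ∧
      ∀ η ν, η ++ [false] <+: ν →
        ¬IsFormulaClique (pCliqueFormula φ hφ) [b (η ++ [true]), b ν] := by
  obtain ⟨k, m, φ, b, hφ, hb, hcons, hinc⟩ := not_not.1 h
  let c (η : List Bool) (j : Fin m) : PRealizations L 𝕄 P := ⟨b η j, hb η j⟩
  refine ⟨k, m, φ, hφ, c, fun σ l hl => ?_, fun η ν hην => ?_⟩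
  · rw [isFormulaClique_pCliqueFormula, List.map_map]
    exact ParamFormula.jointlyConsistent_of_forall_famConsistent hcons σ hl
  · rw [isFormulaClique_pCliqueFormula]
    exact fun hJ => hinc η ν hην
      ((ParamFormula.jointlyConsistent_pair.1 hJ).imp fun _ => And.symm)

theorem IsFullCombTree.of_pCliqueFormula {φ : ParamFormula L 𝕄 (Fin k ⊕ (Fin m × Fin nv))}
    {hφ : φ.ParamsIn A} {n : ℕ} {T : List Bool → Fin m → PRealizations L 𝕄 P}
    (hT : IsFullCombTree (fun a b => IsFormulaClique (pCliqueFormula φ hφ) [a, b])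
      (IsFormulaClique (pCliqueFormula φ hφ)) n T) :
    IsFullCombTree (fun a b => φ.JointlyConsistent [a, b]) φ.JointlyConsistent n
      fun η q => (T η q.1).1 q.2 where
  not_rel η hη ν hν hην h :=
    hT.not_rel η hη ν hν hην ((isFormulaClique_pCliqueFormula hφ [T η, T ν]).2 h)
  comb C hC := by
    have h := (isFormulaClique_pCliqueFormula hφ _).1 (hT.comb C hC)
    rwa [List.map_map] at h

end CoNSOP1

theorem statement_11_general (L : FirstOrder.Language.{u, v}) (𝕄 : Type w) [L.Structure 𝕄]
    (κ : Cardinal.{w}) [IsMonster L 𝕄 κ] (hκ : Infinite 𝕄 → Cardinal.aleph0 < κ)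
    {A : Set 𝕄} (hA : Cardinal.mk A < κ) {nv : ℕ} (P : Set (ParamFormula L 𝕄 (Fin nv)))
    (hT : ¬HasKDCTP2 L 𝕄 2)
    (hInternal : IsNSOP1Th (pLang L 𝕄 A nv) (PRealizations L 𝕄 P)) :
    CoNSOP1 L 𝕄 A P := by
  by_contra h
  obtain ⟨k, m, φ, hφ, b, hpath, hinc⟩ := exists_isFormulaClique_tree_of_not_coNSOP1 h
  have : Infinite (Fin m → PRealizations L 𝕄 P) :=
    infinite_of_forall_not_rel (R := fun c d => IsFormulaClique (pCliqueFormula φ hφ) [c, d])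
      (fun η => hpath η [η, η] (by simp)) hinc
  have : Infinite (PRealizations L 𝕄 P) := infinite_of_infinite_pi (ι := Fin m)
  have : Infinite (Fin nv → 𝕄) := .of_injective _ fun a b : PRealizations L 𝕄 P => Subtype.ext
  choose T hcomb using hInternal.exists_isFullCombTree (pCliqueFormula φ hφ) b hpath hinc
  obtain ⟨c, hc⟩ := exists_isCombTree_of_forall_isFullCombTree
    (hκ (infinite_of_infinite_pi (ι := Fin nv))) hA hφ
    (fun _ => eventually_mem_combs) fun n => (hcomb n).of_pCliqueFormula
  exact hT (hasKDCTP2_two_of_isCombTree hc)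

/-- in an N-ω-DCTP₂ theory, internally NSOP₁ partial types over a
model are co-NSOP₁. -/
theorem statement_11
    (L : FirstOrder.Language.{u, v}) (𝕄 : Type w) [L.Structure 𝕄]
    (κ : Cardinal.{w}) [IsMonster L 𝕄 κ]
    (M : L.ElementarySubstructure 𝕄) (hMsmall : Cardinal.mk ↥(M : Set 𝕄) < κ)
    {nv : ℕ} (P : Set (ParamFormula L 𝕄 (Fin nv)))
    (hP : ∀ φ ∈ P, φ.ParamsIn (M : Set 𝕄))
    (hT : NOmegaDCTP2 L 𝕄)
    (hInternal : IsNSOP1Th (pLang L 𝕄 (M : Set 𝕄) nv) (PRealizations L 𝕄 P)) :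
    CoNSOP1 L 𝕄 (M : Set 𝕄) P :=
  statement_11_general L 𝕄 κ (fun h => (Cardinal.aleph0_le_mk_iff.2
    ((ElementarilyEquivalent.infinite_iff M.elementarilyEquivalent).2 h)).trans_lt hMsmall)
    hMsmall P (hT 2) hInternal

end NSOP3Paper
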